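/- arXiv:1609.05890 — 9 statements merged into one kernel-verified Lean document; each statement's English description precedes it below -/
import Mathlib

section
/- For every integer n ≥ 2, the maximum dimension of a proper face of C_n equals n⁴ − 3n² + 1; that is, every nonempty face of C_n other than C_n itself has affine dimension at most n⁴ − 3n² + 1, and there exists a nonempty face of C_n, distinct from C_n, whose affine dimension equals n⁴ − 3n² + 1. -/
open Matrix
open scoped ComplexOrder

noncomputable section

/-- `Cset n` is the set of n²×n² complex positive semidefinite matrices, written in block
form with blocks indexed by pairs `(i,k)` (block row `i`, inner row `k`), whose `(i,j)`
blocks have trace `δ_{ij}`.  It corresponds to the set of quantum channels via the Choi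
matrix. -/
def Cset (n : ℕ) : Set (Matrix (Fin n × Fin n) (Fin n × Fin n) ℂ) :=
  {A | A.PosSemidef ∧
    ∀ i j : Fin n, ∑ k : Fin n, A (i, k) (j, k) = if i = j then 1 else 0}

/-- `F` is a face of the convex set `C`: a convex subset such that whenever a point of `F`
lies in the open segment between two points of `C`, both endpoints lie in `F`. -/
def IsFace {V : Type*} [AddCommGroup V] [Module ℝ V] (C F : Set V) : Prop :=
  F ⊆ C ∧ Convex ℝ F ∧
    ∀ x ∈ C, ∀ y ∈ C, ∀ t : ℝ, 0 < t → t < 1 → t • x + (1 - t) • y ∈ F → x ∈ F ∧ y ∈ F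

/-- The face of `C` generated by `A`: the smallest face of `C` containing `A`. -/
def faceGen {V : Type*} [AddCommGroup V] [Module ℝ V] (C : Set V) (A : V) : Set V :=
  ⋂₀ {F : Set V | IsFace C F ∧ A ∈ F}

/-- The dimension of a face: the dimension of its affine hull as a real affine subspace. -/
def faceDim {V : Type*} [AddCommGroup V] [Module ℝ V] (F : Set V) : ℕ :=
  Module.finrank ℝ ↥(vectorSpan ℝ F)

lemma finrank_herm (m : Type) [Fintype m] [DecidableEq m] :
    Module.finrank ℝ (selfAdjoint (Matrix m m ℂ)) = Fintype.card m ^ 2 := by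
  have e1 := (StarModule.decomposeProdAdjoint ℝ (Matrix m m ℂ)).finrank_eq
  let e2 : selfAdjoint (Matrix m m ℂ) ≃ₗ[ℝ] skewAdjoint (Matrix m m ℂ) :=
    { toFun := fun x => ⟨Complex.I • (x : Matrix m m ℂ), by
        have hx : star (x : Matrix m m ℂ) = x := x.2
        rw [skewAdjoint.mem_iff, star_smul, hx]; simp⟩
      invFun := fun x => ⟨(-Complex.I) • (x : Matrix m m ℂ), by
        have hx : star (x : Matrix m m ℂ) = -x := x.2
        rw [selfAdjoint.mem_iff, star_smul, hx]; simp⟩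
      map_add' := fun x y => by ext1; simp
      map_smul' := fun r x => by ext1; exact (smul_comm r Complex.I (x : Matrix m m ℂ)).symm
      left_inv := fun x => by ext1; simp [smul_smul]
      right_inv := fun x => by ext1; simp [smul_smul] }
  have e3 := e2.finrank_eq
  have : FiniteDimensional ℝ (selfAdjoint (Matrix m m ℂ)) :=
    inferInstanceAs (FiniteDimensional ℝ (selfAdjoint.submodule ℝ (Matrix m m ℂ)))
  have : FiniteDimensional ℝ (skewAdjoint (Matrix m m ℂ)) :=
    inferInstanceAs (FiniteDimensional ℝ (skewAdjoint.submodule ℝ (Matrix m m ℂ)))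
  rw [Module.finrank_prod, ← e3, finrank_real_of_complex, Module.finrank_matrix] at e1
  simp only [Module.finrank_self] at e1
  nlinarith

/-- The tangent space. -/
def Tan (n : ℕ) (v : Fin n × Fin n → ℂ) :
    Submodule ℝ (Matrix (Fin n × Fin n) (Fin n × Fin n) ℂ) where
  carrier := {H | H.IsHermitian ∧ H *ᵥ v = 0 ∧ ∀ i j : Fin n, ∑ k : Fin n, H (i, k) (j, k) = 0}
  zero_mem' := by simp
  add_mem' := by
    rintro a b ⟨h1, h2, h3⟩ ⟨k1, k2, k3⟩
    refine ⟨h1.add k1, by rw [add_mulVec, h2, k2, add_zero], fun i j => ?_⟩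
    simp [Finset.sum_add_distrib, h3, k3]
  smul_mem' := by
    rintro c a ⟨h1, h2, h3⟩
    refine ⟨?_, by rw [smul_mulVec, h2, smul_zero], fun i j => ?_⟩
    · unfold Matrix.IsHermitian at *
      rw [conjTranspose_smul, h1]; simp
    · simp only [Matrix.smul_apply, ← Finset.smul_sum, h3, smul_zero]

/-- The adjoint map. -/
def Tadj (n : ℕ) (v : Fin n × Fin n → ℂ) :
    (selfAdjoint (Matrix (Fin n) (Fin n) ℂ) × (Fin n × Fin n → ℂ)) →ₗ[ℝ]
      selfAdjoint (Matrix (Fin n × Fin n) (Fin n × Fin n) ℂ) where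
  toFun p := ⟨Matrix.of fun a b => (p.1 : Matrix (Fin n) (Fin n) ℂ) a.1 b.1 * (if a.2 = b.2 then 1 else 0)
      + p.2 a * star (v b) + v a * star (p.2 b), by
    have hK : star (p.1 : Matrix (Fin n) (Fin n) ℂ) = p.1 := p.1.2
    rw [selfAdjoint.mem_iff]
    ext a b
    have := congrFun (congrFun hK a.1) b.1
    rw [star_apply] at this
    simp only [star_apply, of_apply, star_add, star_mul', star_star, this]
    by_cases h : a.2 = b.2
    · simp [h]; ring
    · simp [h, Ne.symm h]; ring⟩
  map_add' p q := by
    ext a b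
    by_cases h : a.2 = b.2
    · simp [h]; ring
    · simp [h]; ring
  map_smul' r p := by
    ext a b; simp; ring

/-- trace form. -/
def tform (m : Type) [Fintype m] [DecidableEq m] :
    LinearMap.BilinForm ℝ (selfAdjoint (Matrix m m ℂ)) :=
  LinearMap.mk₂ ℝ (fun A B => ((A : Matrix m m ℂ) * (B : Matrix m m ℂ)).trace.re)
    (by intros; simp [add_mul]) (by intros; simp)
    (by intros; simp [mul_add]) (by intros; simp)

lemma trace_self_eq {m : Type} [Fintype m] [DecidableEq m] (A : Matrix m m ℂ)
    (hA : star A = A) (h : (A * A).trace.re = 0) : A = 0 := by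
  have h1 : (Aᴴ * A).trace = 0 := by
    have h2 : 0 ≤ (Aᴴ * A).trace := (posSemidef_conjTranspose_mul_self A).trace_nonneg
    have hA' : Aᴴ = A := hA
    rw [hA'] at h2 ⊢
    rw [Complex.le_def] at h2
    exact Complex.ext h h2.2.symm
  exact trace_conjTranspose_mul_self_eq_zero_iff.mp h1

lemma tform_nondeg (m : Type) [Fintype m] [DecidableEq m] : (tform m).Nondegenerate := by
  constructor
  · intro A h
    have := h A
    ext1
    exact trace_self_eq _ A.2 this
  · intro A h
    have := h A
    ext1
    exact trace_self_eq _ A.2 this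

lemma exists_perp (n : ℕ) (hn : 2 ≤ n) (a : Fin n → ℂ) : ∃ z : Fin n → ℂ, z ≠ 0 ∧ ∑ k, a k * z k = 0 := by
  let f : (Fin n → ℂ) →ₗ[ℂ] ℂ := ∑ k, a k • LinearMap.proj k
  have : f.ker ≠ ⊥ := LinearMap.ker_ne_bot_of_finrank_lt (by simp; omega)
  obtain ⟨z, hz, hz0⟩ := (Submodule.ne_bot_iff _).mp this
  exact ⟨z, hz0, by simpa [f] using hz⟩

lemma herm_zero {m : Type} [Fintype m] [DecidableEq m] (K : Matrix m m ℂ) (hK : K.IsHermitian)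
    (h : ∀ y, star y ⬝ᵥ K *ᵥ y = 0) : K = 0 := by
  have h1 : K.PosSemidef := posSemidef_iff_dotProduct_mulVec.2 ⟨hK, fun x => (h x).ge⟩
  ext i j
  have := (h1.dotProduct_mulVec_zero_iff (Pi.single j 1)).1 (h _)
  simpa using congrFun this i

lemma Tadj_ker_aux (n : ℕ) (hn : 2 ≤ n) (v : Fin n × Fin n → ℂ) 
    (K : Matrix (Fin n) (Fin n) ℂ) (hK : K.IsHermitian) (w : Fin n × Fin n → ℂ)
    (h : ∀ a b : Fin n × Fin n, K a.1 b.1 * (if a.2 = b.2 then 1 else 0) + w a * star (v b)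
      + v a * star (w b) = 0) : K = 0 := by
  apply herm_zero K hK
  intro y
  obtain ⟨z, hz, hzz⟩ := exists_perp n hn (fun k => ∑ i, star (v (i, k)) * y i)
  have e1 : ∑ b : Fin n × Fin n, star (v b) * (y b.1 * z b.2) = 0 := by
    rw [← hzz, Fintype.sum_prod_type_right]
    simp only [Finset.sum_mul, mul_assoc]
  have e2 : ∑ b : Fin n × Fin n, v b * star (y b.1 * z b.2) = 0 := by
    have := congrArg star e1
    simpa [star_sum, mul_comm, mul_left_comm] using this
  have key : ∑ a : Fin n × Fin n, ∑ b : Fin n × Fin n,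
      star (y a.1 * z a.2) * (K a.1 b.1 * (if a.2 = b.2 then 1 else 0) + w a * star (v b)
      + v a * star (w b)) * (y b.1 * z b.2) = 0 := by
    simp only [h, mul_zero, zero_mul, Finset.sum_const_zero]
  have t1 : ∀ a b : Fin n × Fin n, 
      star (y a.1 * z a.2) * (K a.1 b.1 * (if a.2 = b.2 then 1 else 0) + w a * star (v b)
      + v a * star (w b)) * (y b.1 * z b.2) = 
      star (y a.1 * z a.2) * (K a.1 b.1 * (if a.2 = b.2 then 1 else 0)) * (y b.1 * z b.2)
      + (star (y a.1 * z a.2) * w a) * (star (v b) * (y b.1 * z b.2))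
      + (v a * star (y a.1 * z a.2)) * (star (w b) * (y b.1 * z b.2)) := by
    intros; ring
  simp only [t1, Finset.sum_add_distrib, ← Finset.mul_sum, ← Finset.sum_mul, e1, e2] at key
  simp only [mul_zero, zero_mul, add_zero] at key
  have t2 : (∑ a : Fin n × Fin n, ∑ b : Fin n × Fin n, star (y a.1 * z a.2) *
      (K a.1 b.1 * (if a.2 = b.2 then 1 else 0)) * (y b.1 * z b.2))
      = (star y ⬝ᵥ K *ᵥ y) * (star z ⬝ᵥ z) := by
    simp only [Fintype.sum_prod_type, dotProduct, mulVec, Pi.star_apply, Finset.mul_sum, Finset.sum_mul]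
    simp only [mul_ite, ite_mul, mul_one, mul_zero, zero_mul, Finset.sum_ite_eq, Finset.mem_univ,
      if_true]
    rw [Finset.sum_comm]
    refine Finset.sum_congr rfl fun i _ => Finset.sum_congr rfl fun j _ => ?_
    refine Finset.sum_congr rfl fun k _ => ?_
    simp only [star_mul']; ring
  rw [t2] at key
  rcases mul_eq_zero.1 key with h | h
  · exact h
  · exact absurd (dotProduct_star_self_eq_zero.1 h) hz
lemma Tadj_ker (n : ℕ) (hn : 2 ≤ n) (v : Fin n × Fin n → ℂ) (hv : v ≠ 0) :
    (Tadj n v).ker = Submodule.span ℝ {(0, Complex.I • v)} := by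
  ext ⟨K, w⟩
  rw [Submodule.mem_span_singleton, LinearMap.mem_ker]
  constructor
  · intro h
    have h' : ∀ a b : Fin n × Fin n, (K : Matrix (Fin n) (Fin n) ℂ) a.1 b.1 * (if a.2 = b.2 then 1 else 0)
        + w a * star (v b) + v a * star (w b) = 0 := by
      intro a b
      exact congrFun (congrFun (congrArg Subtype.val h) a) b
    have hK : K = 0 := by
      ext1
      exact Tadj_ker_aux n hn v K K.2 w h'
    subst hK
    obtain ⟨b, hb⟩ := Function.ne_iff.1 hv
    have hb' : v b ≠ 0 := hb
    have hsb : star (v b) ≠ 0 := star_ne_zero.2 hb'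
    have h2 : ∀ a, w a = - (star (w b) / star (v b)) * v a := by
      intro a
      have := h' a b
      simp only [ZeroMemClass.coe_zero, Matrix.zero_apply, zero_mul, zero_add] at this
      field_simp
      linear_combination this
    set c := - (star (w b) / star (v b)) with hc
    have h3 : c + star c = 0 := by
      have := h' b b
      simp only [ZeroMemClass.coe_zero, Matrix.zero_apply, zero_mul, zero_add, h2 b, star_mul'] at this
      have h4 : (c + star c) * (v b * star (v b)) = 0 := by linear_combination this
      exact (mul_eq_zero.1 h4).resolve_right (mul_ne_zero hb' hsb)
    have hre : c.re = 0 := by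
      have := congrArg Complex.re h3
      simp at this
      linarith
    refine ⟨c.im, ?_⟩
    refine Prod.ext (by simp) ?_
    funext a
    have : c = c.im * Complex.I := by apply Complex.ext <;> simp [hre]
    simp only [Prod.smul_snd, Pi.smul_apply, smul_eq_mul, Complex.real_smul]
    rw [h2 a, ← mul_assoc, ← this]
  · rintro ⟨r, hr⟩
    rw [← hr, map_smul]
    have : Tadj n v (0, Complex.I • v) = 0 := by
      ext a b
      simp [Tadj]; ring
    rw [this, smul_zero]

lemma trace_Tadj (n : ℕ) (v : Fin n × Fin n → ℂ) (K : selfAdjoint (Matrix (Fin n) (Fin n) ℂ))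
    (w : Fin n × Fin n → ℂ) (H : Matrix (Fin n × Fin n) (Fin n × Fin n) ℂ) :
    ((Tadj n v (K, w) : Matrix _ _ ℂ) * H).trace =
      ((K : Matrix _ _ ℂ) * (Matrix.of fun i j => ∑ k, H (i, k) (j, k))).trace
       + star v ⬝ᵥ H *ᵥ w + star w ⬝ᵥ H *ᵥ v := by
  have e : (Tadj n v (K, w) : Matrix _ _ ℂ) = (Matrix.of fun a b : Fin n × Fin n =>
      (K : Matrix (Fin n) (Fin n) ℂ) a.1 b.1 * (if a.2 = b.2 then 1 else 0))
      + vecMulVec w (star v) + vecMulVec v (star w) := rfl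
  rw [e, add_mul, add_mul, trace_add, trace_add]
  congr 1
  · congr 1
    · simp only [trace, diag, mul_apply, of_apply, Fintype.sum_prod_type, Finset.mul_sum]
      simp only [mul_ite, ite_mul, mul_one, mul_zero, zero_mul, Finset.sum_ite_eq, Finset.mem_univ,
        if_true]
      refine Finset.sum_congr rfl fun i _ => ?_
      rw [Finset.sum_comm]
    · rw [vecMulVec_mul, trace_vecMulVec, dotProduct_mulVec, dotProduct_comm]
  · rw [vecMulVec_mul, trace_vecMulVec, dotProduct_mulVec, dotProduct_comm]

lemma orth_iff (n : ℕ) (v : Fin n × Fin n → ℂ)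
    (H : selfAdjoint (Matrix (Fin n × Fin n) (Fin n × Fin n) ℂ)) :
    H ∈ (tform (Fin n × Fin n)).orthogonal (Tadj n v).range ↔
      (H : Matrix (Fin n × Fin n) (Fin n × Fin n) ℂ) ∈ Tan n v := by
  have hH : (H : Matrix (Fin n × Fin n) (Fin n × Fin n) ℂ).IsHermitian := H.2
  have hB : ∀ X Y, tform (Fin n × Fin n) X Y = ((X : Matrix (Fin n × Fin n) (Fin n × Fin n) ℂ) * (Y : Matrix (Fin n × Fin n) (Fin n × Fin n) ℂ)).trace.re :=
    fun _ _ => rfl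
  constructor
  · intro h
    have h1 : ∀ K w, ((Tadj n v (K, w) : Matrix (Fin n × Fin n) (Fin n × Fin n) ℂ) * (H : Matrix (Fin n × Fin n) (Fin n × Fin n) ℂ)).trace.re = 0 := by
      intro K w
      exact h _ ⟨(K, w), rfl⟩
    have hp : star (Matrix.of fun i j => ∑ k, (H : Matrix (Fin n × Fin n) (Fin n × Fin n) ℂ) (i, k) (j, k))
        = (Matrix.of fun i j => ∑ k, (H : Matrix (Fin n × Fin n) (Fin n × Fin n) ℂ) (i, k) (j, k)) := by
      ext i j
      simp only [star_apply, of_apply, star_sum]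
      exact Finset.sum_congr rfl fun k _ => hH.apply _ _
    refine ⟨hH, ?_, ?_⟩
    · have h2 := h1 0 ((H : Matrix (Fin n × Fin n) (Fin n × Fin n) ℂ) *ᵥ v)
      rw [trace_Tadj] at h2
      have e : star v ⬝ᵥ (H : Matrix (Fin n × Fin n) (Fin n × Fin n) ℂ) *ᵥ ((H : Matrix (Fin n × Fin n) (Fin n × Fin n) ℂ) *ᵥ v) =
          star ((H : Matrix (Fin n × Fin n) (Fin n × Fin n) ℂ) *ᵥ v) ⬝ᵥ (H : Matrix (Fin n × Fin n) (Fin n × Fin n) ℂ) *ᵥ v := by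
        rw [dotProduct_mulVec, star_mulVec, hH.eq]
      rw [e] at h2
      simp only [ZeroMemClass.coe_zero, zero_mul, trace_zero, zero_add, Complex.add_re] at h2
      apply dotProduct_star_self_eq_zero.1
      have h3 : 0 ≤ star ((H : Matrix (Fin n × Fin n) (Fin n × Fin n) ℂ) *ᵥ v) ⬝ᵥ (H : Matrix (Fin n × Fin n) (Fin n × Fin n) ℂ) *ᵥ v :=
        dotProduct_star_self_nonneg _
      rw [Complex.le_def] at h3
      exact Complex.ext (by simp; linarith) h3.2.symm
    · have h2 := h1 ⟨_, hp⟩ 0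
      rw [trace_Tadj] at h2
      simp only [star_zero, zero_dotProduct, mulVec_zero, dotProduct_zero, add_zero] at h2
      have := trace_self_eq _ hp h2
      intro i j
      exact congrFun (congrFun this i) j
  · rintro ⟨-, h2, h3⟩ _ ⟨⟨K, w⟩, rfl⟩
    change tform _ _ _ = 0
    rw [hB, trace_Tadj]
    have e : star v ⬝ᵥ (H : Matrix (Fin n × Fin n) (Fin n × Fin n) ℂ) *ᵥ w = 0 := by
      have : star v ᵥ* (H : Matrix (Fin n × Fin n) (Fin n × Fin n) ℂ) = star ((H : Matrix (Fin n × Fin n) (Fin n × Fin n) ℂ) *ᵥ v) := by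
        rw [star_mulVec, hH.eq]
      rw [dotProduct_mulVec, this, h2]; simp
    have e' : (Matrix.of fun i j => ∑ k, (H : Matrix (Fin n × Fin n) (Fin n × Fin n) ℂ) (i, k) (j, k)) = 0 := by
      ext i j; exact h3 i j
    rw [e, e', h2]; simp

lemma finrank_Tan (n : ℕ) (hn : 2 ≤ n) (v : Fin n × Fin n → ℂ) (hv : v ≠ 0) :
    Module.finrank ℝ (Tan n v) = n ^ 4 - 3 * n ^ 2 + 1 := by
  have : FiniteDimensional ℝ (selfAdjoint (Matrix (Fin n) (Fin n) ℂ)) :=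
    inferInstanceAs (FiniteDimensional ℝ (selfAdjoint.submodule ℝ (Matrix (Fin n) (Fin n) ℂ)))
  have : FiniteDimensional ℝ (selfAdjoint (Matrix (Fin n × Fin n) (Fin n × Fin n) ℂ)) :=
    inferInstanceAs (FiniteDimensional ℝ (selfAdjoint.submodule ℝ (Matrix (Fin n × Fin n) (Fin n × Fin n) ℂ)))
  have h1 := (Tadj n v).finrank_range_add_finrank_ker
  rw [Tadj_ker n hn v hv, finrank_span_singleton, Module.finrank_prod, finrank_herm,
    finrank_real_of_complex] at h1
  · have h2 := LinearMap.BilinForm.finrank_orthogonal (tform_nondeg (Fin n × Fin n)) (Tadj n v).range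
    rw [finrank_herm] at h2
    let ι : selfAdjoint (Matrix (Fin n × Fin n) (Fin n × Fin n) ℂ) →ₗ[ℝ]
        Matrix (Fin n × Fin n) (Fin n × Fin n) ℂ :=
      { toFun := Subtype.val, map_add' := fun _ _ => rfl, map_smul' := fun _ _ => rfl }
    have hι : Function.Injective ι := Subtype.val_injective
    have h3 : Tan n v = ((tform (Fin n × Fin n)).orthogonal (Tadj n v).range).map ι := by
      ext H
      rw [Submodule.mem_map]
      constructor
      · intro h
        exact ⟨⟨H, h.1⟩, (orth_iff n v _).2 h, rfl⟩
      · rintro ⟨X, hX, rfl⟩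
        exact (orth_iff n v _).1 hX
    have h4 : Module.finrank ℝ (Tan n v) = Module.finrank ℝ ((tform (Fin n × Fin n)).orthogonal (Tadj n v).range) := by
      rw [h3]
      exact (Submodule.equivMapOfInjective ι hι _).finrank_eq.symm
    rw [h4, h2]
    simp only [Fintype.card_prod, Fintype.card_fin, Module.finrank_fintype_fun_eq_card] at *
    have h5 : n ^ 4 = (n * n) ^ 2 := by ring
    have h6 : 4 * n ^ 2 ≤ n ^ 4 := by nlinarith [Nat.pow_le_pow_left hn 2]
    have h7 : n ^ 2 = n * n := by ring
    omega
  · intro h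
    apply hv
    have := congrArg Prod.snd h
    simpa using this
section
open scoped MatrixOrder Matrix.Norms.L2Operator

lemma herm_bound {m : Type} [Fintype m] [DecidableEq m] (H : Matrix m m ℂ) (hH : H.IsHermitian) :
    ∃ c : ℝ, 0 < c ∧ (c • (1 : Matrix m m ℂ) - H).PosSemidef := by
  have hs : IsSelfAdjoint H := hH
  have h := hs.le_algebraMap_norm_self
  rw [Matrix.le_iff, Algebra.algebraMap_eq_smul_one] at h
  refine ⟨‖H‖ + 1, by positivity, ?_⟩
  have : (‖H‖ + 1) • (1 : Matrix m m ℂ) - H = (‖H‖ • 1 - H) + 1 := by module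
  rw [this]
  exact h.add PosSemidef.one

lemma posDef_bound {m : Type} [Fintype m] [DecidableEq m] (B : Matrix m m ℂ) (hB : B.PosDef) :
    ∃ c : ℝ, 0 < c ∧ (B - c • (1 : Matrix m m ℂ)).PosSemidef := by
  cases isEmpty_or_nonempty m
  · refine ⟨1, one_pos, ?_⟩
    have : B - (1 : ℝ) • (1 : Matrix m m ℂ) = 1 := Subsingleton.elim _ _
    rw [this]; exact PosSemidef.one
  have h : IsStrictlyPositive B := hB.isStrictlyPositive
  obtain ⟨c, hc, h⟩ := (CFC.exists_pos_algebraMap_le_iff h.isSelfAdjoint).2 fun x hx ↦ h.spectrum_pos hx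
  rw [Matrix.le_iff, Algebra.algebraMap_eq_smul_one] at h
  exact ⟨c, hc, h⟩

end

lemma psd_smul {m : Type} [Fintype m] {A : Matrix m m ℂ} (hA : A.PosSemidef) (c : ℝ) (hc : 0 ≤ c) :
    (c • A).PosSemidef := by
  have := hA.smul (show (0 : ℂ) ≤ (c : ℂ) by exact_mod_cast hc)
  rwa [Complex.coe_smul] at this

lemma extend {m : Type} [Fintype m] [DecidableEq m] (B C : Matrix m m ℂ) (hB : B.PosDef)
    (hC : C.IsHermitian) : ∃ ε : ℝ, 0 < ε ∧ ((1 + ε) • B - ε • C).PosSemidef := by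
  obtain ⟨d, hd, h1⟩ := posDef_bound B hB
  obtain ⟨c, hc, h2⟩ := herm_bound C hC
  refine ⟨d / c, by positivity, ?_⟩
  have : (1 + d / c) • B - (d / c) • C = (d / c) • B + (B - d • 1) + (d / c) • (c • 1 - C) := by
    rw [smul_sub, smul_smul, div_mul_cancel₀ _ hc.ne']
    module
  rw [this]
  exact ((psd_smul hB.posSemidef _ (by positivity)).add h1).add (psd_smul h2 _ (by positivity))

lemma comb_mem (n : ℕ) (B C : Matrix (Fin n × Fin n) (Fin n × Fin n) ℂ) (hB : B ∈ Cset n)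
    (hC : C ∈ Cset n) (ε : ℝ) (h : ((1 + ε) • B - ε • C).PosSemidef) :
    (1 + ε) • B - ε • C ∈ Cset n := by
  refine ⟨h, fun i j => ?_⟩
  simp only [Matrix.sub_apply, Matrix.smul_apply, Finset.sum_sub_distrib, ← Finset.smul_sum, hB.2, hC.2]
  module

lemma face_full (n : ℕ) (F : Set (Matrix (Fin n × Fin n) (Fin n × Fin n) ℂ))
    (hF : IsFace (Cset n) F) (B : Matrix (Fin n × Fin n) (Fin n × Fin n) ℂ) (hBF : B ∈ F)
    (hB : B.PosDef) : F = Cset n := by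
  refine Set.Subset.antisymm hF.1 fun C hC => ?_
  obtain ⟨ε, hε, h⟩ := extend B C hB hC.1.1
  have hD := comb_mem n B C (hF.1 hBF) hC ε h
  refine (hF.2.2 _ hD C hC (1 / (1 + ε)) (by positivity) (by rw [div_lt_one] <;> linarith) ?_).2
  have e : (1 / (1 + ε)) • ((1 + ε) • B - ε • C) + (1 - 1 / (1 + ε)) • C = B := by
    rw [smul_sub, smul_smul, smul_smul, one_div_mul_cancel (by positivity)]
    have : 1 - 1 / (1 + ε) = 1 / (1 + ε) * ε := by field_simp; ring
    rw [this]; module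
  rwa [e]

lemma face_kernel (n : ℕ) (F : Set (Matrix (Fin n × Fin n) (Fin n × Fin n) ℂ))
    (hF : IsFace (Cset n) F) (hne : F.Nonempty) (hpr : F ≠ Cset n) :
    ∃ v : Fin n × Fin n → ℂ, v ≠ 0 ∧ ∀ B ∈ F, B *ᵥ v = 0 := by
  by_contra! hcon
  let d : Matrix (Fin n × Fin n) (Fin n × Fin n) ℂ → ℕ := fun B => Module.finrank ℂ (B.mulVecLin).ker
  obtain ⟨B, hB, hmin⟩ : ∃ B ∈ F, ∀ B' ∈ F, d B ≤ d B' := by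
    obtain ⟨B, hB, h⟩ := (measure d).wf.has_min F hne
    exact ⟨B, hB, fun B' hB' => not_lt.1 (h B' hB')⟩
  have hBp : B.PosSemidef := (hF.1 hB).1
  by_cases hu : ∃ v, v ≠ 0 ∧ B *ᵥ v = 0
  · obtain ⟨v, hv, hBv⟩ := hu
    obtain ⟨C, hC, hCv⟩ := hcon v hv
    have hCp : C.PosSemidef := (hF.1 hC).1
    have hM : (1 / 2 : ℝ) • B + (1 / 2 : ℝ) • C ∈ F :=
      hF.2.1 hB hC (by norm_num) (by norm_num) (by norm_num)
    have hk : ∀ x, ((1 / 2 : ℝ) • B + (1 / 2 : ℝ) • C) *ᵥ x = 0 → B *ᵥ x = 0 ∧ C *ᵥ x = 0 := by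
      intro x hx
      have h0 : star x ⬝ᵥ B *ᵥ x + star x ⬝ᵥ C *ᵥ x = 0 := by
        have h1 : B *ᵥ x + C *ᵥ x = 0 := by
          rw [add_mulVec, smul_mulVec, smul_mulVec, ← smul_add] at hx
          exact (smul_eq_zero.1 hx).resolve_left (by norm_num)
        rw [← dotProduct_add, h1, dotProduct_zero]
      have hb := hBp.dotProduct_mulVec_nonneg x
      have hc := hCp.dotProduct_mulVec_nonneg x
      have h2 := (add_eq_zero_iff_of_nonneg hb hc).1 h0
      exact ⟨(hBp.dotProduct_mulVec_zero_iff x).1 h2.1, (hCp.dotProduct_mulVec_zero_iff x).1 h2.2⟩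
    have hlt : d ((1 / 2 : ℝ) • B + (1 / 2 : ℝ) • C) < d B := by
      apply Submodule.finrank_lt_finrank_of_lt
      refine lt_of_le_of_ne ?_ ?_
      · intro x hx
        rw [LinearMap.mem_ker, mulVecLin_apply] at hx ⊢
        exact (hk x hx).1
      · intro heq
        have : v ∈ B.mulVecLin.ker := by rw [LinearMap.mem_ker, mulVecLin_apply]; exact hBv
        rw [← heq, LinearMap.mem_ker, mulVecLin_apply] at this
        exact hCv (hk v this).2
    exact absurd (hmin _ hM) (not_le.2 hlt)
  · rw [exists_mulVec_eq_zero_iff] at hu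
    have : B.PosDef := hBp.posDef_iff_isUnit.2 ((isUnit_iff_isUnit_det B).2 (isUnit_iff_ne_zero.2 hu))
    exact hpr (face_full n F hF B hB this)

lemma span_le (n : ℕ) (F : Set (Matrix (Fin n × Fin n) (Fin n × Fin n) ℂ)) (hF : F ⊆ Cset n)
    (v : Fin n × Fin n → ℂ) (hv : ∀ B ∈ F, B *ᵥ v = 0) : vectorSpan ℝ F ≤ Tan n v := by
  rw [vectorSpan_def, Submodule.span_le]
  rintro _ ⟨B, hB, C, hC, rfl⟩
  refine ⟨(hF hB).1.1.sub (hF hC).1.1, ?_, fun i j => ?_⟩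
  · simp only [vsub_eq_sub, sub_mulVec, hv B hB, hv C hC, sub_zero]
  · simp [Finset.sum_sub_distrib, (hF hB).2, (hF hC).2]

/-- exposed face. -/
def Fv (n : ℕ) (v : Fin n × Fin n → ℂ) : Set (Matrix (Fin n × Fin n) (Fin n × Fin n) ℂ) :=
  {B | B ∈ Cset n ∧ B *ᵥ v = 0}

lemma Fv_face (n : ℕ) (v : Fin n × Fin n → ℂ) : IsFace (Cset n) (Fv n v) := by
  refine ⟨fun B h => h.1, ?_, ?_⟩
  · rintro A ⟨hA, hAv⟩ B ⟨hB, hBv⟩ a b ha hb hab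
    refine ⟨⟨(psd_smul hA.1 a ha).add (psd_smul hB.1 b hb), fun i j => ?_⟩, ?_⟩
    · simp only [Matrix.add_apply, Matrix.smul_apply, Finset.sum_add_distrib, ← Finset.smul_sum, hA.2, hB.2]
      rw [← add_smul, hab, one_smul]
    · rw [add_mulVec, smul_mulVec, smul_mulVec, hAv, hBv]; simp
  · rintro A hA B hB t ht0 ht1 ⟨-, h⟩
    have ha := (psd_smul hA.1 t ht0.le)
    have hb := (psd_smul hB.1 (1 - t) (by linarith))
    have h0 : star v ⬝ᵥ (t • A) *ᵥ v + star v ⬝ᵥ ((1 - t) • B) *ᵥ v = 0 := by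
      rw [← dotProduct_add, ← add_mulVec, h, dotProduct_zero]
    have h2 := (add_eq_zero_iff_of_nonneg (ha.dotProduct_mulVec_nonneg v)
      (hb.dotProduct_mulVec_nonneg v)).1 h0
    have h3 := (ha.dotProduct_mulVec_zero_iff v).1 h2.1
    have h4 := (hb.dotProduct_mulVec_zero_iff v).1 h2.2
    rw [smul_mulVec] at h3 h4
    exact ⟨⟨hA, (smul_eq_zero.1 h3).resolve_left ht0.ne'⟩,
      ⟨hB, (smul_eq_zero.1 h4).resolve_left (by linarith)⟩⟩
lemma exists_good (n : ℕ) (hn : 2 ≤ n) : ∃ v : Fin n × Fin n → ℂ, v ≠ 0 ∧ (Fv n v).Nonempty ∧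
    Fv n v ≠ Cset n ∧ Tan n v ≤ vectorSpan ℝ (Fv n v) := by
  have hn2 : (2 : ℝ) ≤ n := by exact_mod_cast hn
  have hn0 : (0 : ℝ) < n := by linarith
  have hn1 : (0 : ℝ) < n - 1 := by linarith
  let o : Fin n := ⟨0, by omega⟩
  let v : Fin n × Fin n → ℂ := Pi.single (o, o) 1
  let d : Fin n × Fin n → ℝ := fun p =>
    if p.1 = o then (if p.2 = o then 0 else 1 / (n - 1)) else 1 / n
  let q : Fin n × Fin n → ℝ := fun p => if p = (o, o) then 0 else 1
  let A : Matrix (Fin n × Fin n) (Fin n × Fin n) ℂ := diagonal fun p => (d p : ℂ)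
  let P : Matrix (Fin n × Fin n) (Fin n × Fin n) ℂ := diagonal fun p => (q p : ℂ)
  have hd0 : ∀ p, 0 ≤ d p := by
    intro p; simp only [d]; split_ifs <;> positivity
  have hdq : ∀ p, 0 ≤ d p - (1 / n) * q p := by
    rintro ⟨i, k⟩
    have : 1 / (n : ℝ) ≤ 1 / (n - 1) := one_div_le_one_div_of_le hn1 (by linarith)
    simp only [d, q, Prod.mk.injEq]
    by_cases hi : i = o <;> by_cases hk : k = o <;> simp [hi, hk] at * <;> linarith
  have hAC : A ∈ Cset n := by
    refine ⟨PosSemidef.diagonal fun p => by simpa using hd0 p, fun i j => ?_⟩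
    by_cases hij : i = j
    · subst hij
      simp only [A, diagonal_apply_eq, if_true]
      rw [← Complex.ofReal_sum]
      norm_cast
      by_cases hi : i = o
      · simp only [d, hi, if_true]
        rw [Finset.sum_ite]
        simp only [Finset.sum_const_zero, zero_add, Finset.sum_const, nsmul_eq_mul]
        have : (Finset.univ.filter fun x : Fin n => ¬ x = o).card = n - 1 := by
          rw [Finset.filter_not, Finset.filter_eq']; simp [Finset.card_sdiff]
        rw [this, Nat.cast_sub (by omega)]
        field_simp
        simp
      · simp only [d, hi, if_false, Finset.sum_const, nsmul_eq_mul, Finset.card_univ, Fintype.card_fin]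
        field_simp
    · simp [A, diagonal_apply, hij]
  have hAv : A *ᵥ v = 0 := by
    simp only [A, v, diagonal_mulVec_single]
    simp [d]
  have hAF : A ∈ Fv n v := ⟨hAC, hAv⟩
  have hv : v ≠ 0 := by simp [v]
  refine ⟨v, hv, ⟨A, hAF⟩, ?_, ?_⟩
  · intro heq
    have h1 : (1 / n : ℝ) • (1 : Matrix (Fin n × Fin n) (Fin n × Fin n) ℂ) ∈ Cset n := by
      refine ⟨psd_smul PosSemidef.one _ (by positivity), fun i j => ?_⟩
      by_cases hij : i = j
      · subst hij
        simp
        have : (n : ℂ) ≠ 0 := by exact_mod_cast hn0.ne'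
        field_simp
      · simp [hij, Matrix.one_apply]
    rw [← heq] at h1
    have h2 := h1.2
    rw [smul_mulVec, one_mulVec] at h2
    exact hv ((smul_eq_zero.1 h2).resolve_left (by positivity))
  · intro H hH
    obtain ⟨c, hc, hcH⟩ := herm_bound (-H) hH.1.neg
    have hcol : ∀ p, H p (o, o) = 0 := by
      intro p
      have := congrFun hH.2.1 p
      simpa [v] using this
    have hrow : ∀ p, H (o, o) p = 0 := by
      intro p
      rw [← hH.1.apply, hcol, star_zero]
    have hPP : P * P = P := by
      simp only [P, diagonal_mul_diagonal]
      congr 1; funext p; simp only [q]; split_ifs <;> simp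
    have hPH : Pᴴ = P := by
      simp only [P, diagonal_conjTranspose]
      congr 1; funext p; simp
    have hPHP : P * H * P = H := by
      ext a b
      simp only [P, mul_diagonal, diagonal_mul, q]
      by_cases ha : a = (o, o)
      · subst ha; simp [hrow]
      · by_cases hb : b = (o, o)
        · subst hb; simp [hcol]
        · simp [ha, hb]
    have hps : (c • P + H).PosSemidef := by
      have := hcH.conjTranspose_mul_mul_same P
      rw [hPH, sub_neg_eq_add, mul_add, add_mul, hPHP] at this
      simpa [hPP] using this
    have hps2 : (A - (1 / n : ℝ) • P).PosSemidef := by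
      have : A - (1 / n : ℝ) • P = diagonal fun p => ((d p - (1 / n) * q p : ℝ) : ℂ) := by
        ext a b
        by_cases hab : a = b
        · subst hab; simp [A, P]
        · simp [A, P, hab]
      rw [this]
      exact PosSemidef.diagonal fun p => by
        have := hdq p
        exact Complex.zero_le_real.2 this
    have hM : A + (1 / (n * c)) • H ∈ Fv n v := by
      refine ⟨⟨?_, fun i j => ?_⟩, ?_⟩
      · have : A + (1 / (n * c)) • H = (A - (1 / n : ℝ) • P) + (1 / (n * c)) • (c • P + H) := by
          rw [smul_add, smul_smul]
          have : 1 / (n * c) * c = 1 / n := by field_simp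
          rw [this]; module
        rw [this]
        exact hps2.add (psd_smul hps _ (by positivity))
      · simp only [Matrix.add_apply, Matrix.smul_apply, Finset.sum_add_distrib, ← Finset.smul_sum,
          hAC.2, hH.2.2, smul_zero, add_zero]
      · rw [add_mulVec, smul_mulVec, hAv, hH.2.1]; simp
    have h3 := vsub_mem_vectorSpan ℝ hM hAF
    have h4 := (vectorSpan ℝ (Fv n v)).smul_mem (n * c) h3
    rw [vsub_eq_sub, add_sub_cancel_left, smul_smul, mul_one_div_cancel (by positivity), one_smul] at h4
    exact h4

/-- The maximum dimension of a proper face of `C_n` is `n⁴ - 3n² + 1`. -/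
theorem max_dim_proper_face (n : ℕ) (hn : 2 ≤ n) :
    (∀ F : Set (Matrix (Fin n × Fin n) (Fin n × Fin n) ℂ),
        IsFace (Cset n) F → F.Nonempty → F ≠ Cset n →
        faceDim F ≤ n ^ 4 - 3 * n ^ 2 + 1) ∧
    ∃ F : Set (Matrix (Fin n × Fin n) (Fin n × Fin n) ℂ),
        IsFace (Cset n) F ∧ F.Nonempty ∧ F ≠ Cset n ∧
        faceDim F = n ^ 4 - 3 * n ^ 2 + 1 := by
  refine ⟨fun F hF hne hpr => ?_, ?_⟩
  · obtain ⟨v, hv, h⟩ := face_kernel n F hF hne hpr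
    rw [← finrank_Tan n hn v hv]
    exact Submodule.finrank_mono (span_le n F hF.1 v h)
  · obtain ⟨v, hv, hne, hpr, hle⟩ := exists_good n hn
    refine ⟨Fv n v, Fv_face n v, hne, hpr, ?_⟩
    rw [← finrank_Tan n hn v hv, faceDim,
      le_antisymm (span_le n (Fv n v) (Fv_face n v).1 v fun B hB => hB.2) hle]
end
end

section
/- Let n ≥ 3 be an integer and let A ∈ C_n with rank A = 2. Then the dimension of the face F(A) of C_n generated by A is 0, 1, or 2. -/
open Matrix
open scoped ComplexOrder

noncomputable section

lemma aux_factor {m : Type} [Fintype m] [DecidableEq m] (A : Matrix m m ℂ) (h : A.rank = 2) :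
    ∃ (X : Matrix m (Fin 2) ℂ) (Y : Matrix (Fin 2) m ℂ), Y * X = 1 ∧ X * Y * A = A := by
  have h2 : Module.finrank ℂ (LinearMap.range (Matrix.toLin' A)) = Module.finrank ℂ (Fin 2 → ℂ) := by
    rw [Module.finrank_fin_fun]; exact h
  let e := LinearEquiv.ofFinrankEq _ _ h2
  let f : (Fin 2 → ℂ) →ₗ[ℂ] (m → ℂ) := (LinearMap.range (Matrix.toLin' A)).subtype ∘ₗ e.symm.toLinearMap
  have hf : LinearMap.ker f = ⊥ := by
    rw [LinearMap.ker_eq_bot]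
    exact Subtype.val_injective.comp e.symm.injective
  obtain ⟨g, hg⟩ := f.exists_leftInverse_of_injective hf
  refine ⟨LinearMap.toMatrix' f, LinearMap.toMatrix' g, ?_, ?_⟩
  · rw [← LinearMap.toMatrix'_comp, hg, LinearMap.toMatrix'_id]
  · have : (f ∘ₗ g) ∘ₗ (Matrix.toLin' A) = Matrix.toLin' A := by
      apply LinearMap.ext
      intro x
      have hx : Matrix.toLin' A x = f (e ⟨Matrix.toLin' A x, LinearMap.mem_range_self _ x⟩) := by
        simp [f]
      have hgf : ∀ z, g (f z) = z := fun z => by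
        have := LinearMap.congr_fun hg z
        simpa using this
      rw [LinearMap.comp_apply, LinearMap.comp_apply, hx, hgf]
    have h3 := congrArg LinearMap.toMatrix' this
    rw [LinearMap.toMatrix'_comp, LinearMap.toMatrix'_comp, LinearMap.toMatrix'_toLin'] at h3
    exact h3

lemma aux_psd {m : Type} [Fintype m] [DecidableEq m] (Q x y : Matrix m m ℂ) (hx : x.PosSemidef)
    (hy : y.PosSemidef) (t : ℝ) (h0 : 0 < t) (h1 : t < 1)
    (h : Q * (t • x + (1 - t) • y) = 0) : Q * x = 0 := by
  have hx1 : (t • (Q * x * Qᴴ)).PosSemidef := (hx.mul_mul_conjTranspose_same Q).smul h0.le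
  have hy1 : ((1 - t) • (Q * y * Qᴴ)).PosSemidef :=
    (hy.mul_mul_conjTranspose_same Q).smul (by linarith)
  have hs : t • (Q * x * Qᴴ) + (1 - t) • (Q * y * Qᴴ) = 0 := by
    have := congrArg (· * Qᴴ) h
    simpa [Matrix.mul_add, Matrix.add_mul] using this
  have hz : t • (Q * x * Qᴴ) = 0 := by
    open scoped MatrixOrder in
    have a1 : (0 : Matrix m m ℂ) ≤ t • (Q * x * Qᴴ) := Matrix.nonneg_iff_posSemidef.2 hx1
    have a2 : (0 : Matrix m m ℂ) ≤ (1 - t) • (Q * y * Qᴴ) := Matrix.nonneg_iff_posSemidef.2 hy1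
    exact ((add_eq_zero_iff_of_nonneg a1 a2).1 hs).1
  have hz2 : Q * x * Qᴴ = 0 := (smul_eq_zero.1 hz).resolve_left h0.ne'
  have hex : ∃ B : Matrix m m ℂ, x = Bᴴ * B := by
    open scoped MatrixOrder Matrix.Norms.L2Operator in
    exact CStarAlgebra.nonneg_iff_eq_star_mul_self.mp hx.nonneg
  obtain ⟨B, rfl⟩ := hex
  have : Q * Bᴴ = 0 := by
    rw [← Matrix.self_mul_conjTranspose_eq_zero]
    simpa [Matrix.mul_assoc] using hz2
  rw [← Matrix.mul_assoc, this, Matrix.zero_mul]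

lemma aux_face {n : ℕ} (Q : Matrix (Fin n × Fin n) (Fin n × Fin n) ℂ) :
    IsFace (Cset n) {B | B ∈ Cset n ∧ Q * B = 0} := by
  refine ⟨fun B hB => hB.1, ?_, ?_⟩
  · rintro x ⟨hx, hx'⟩ y ⟨hy, hy'⟩ a b ha hb hab
    refine ⟨⟨(hx.1.smul ha).add (hy.1.smul hb), fun i j => ?_⟩, ?_⟩
    · have h1 := hx.2 i j
      have h2 := hy.2 i j
      have : ∑ k, (a • x + b • y) (i, k) (j, k)
        = a • (∑ k, x (i, k) (j, k)) + b • ∑ k, y (i, k) (j, k) := by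
        simp [Finset.sum_add_distrib, Finset.mul_sum]
      rw [this, h1, h2, ← add_smul, hab, one_smul]
    · simp [Matrix.mul_add, hx', hy']
  · rintro x hx y hy t h0 h1 ⟨-, h⟩
    refine ⟨⟨hx, aux_psd Q x y hx.1 hy.1 t h0 h1 h⟩, hy,
      aux_psd Q y x hy.1 hx.1 (1 - t) (by linarith) (by linarith) ?_⟩
    rw [← h]; congr 1; rw [add_comm]; simp

def auxH : (Fin 4 → ℝ) →ₗ[ℝ] Matrix (Fin 2) (Fin 2) ℂ where
  toFun v := !![(v 0 : ℂ), v 2 + v 3 * Complex.I; v 2 - v 3 * Complex.I, v 1]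
  map_add' v w := by
    ext i j; fin_cases i <;> fin_cases j <;> simp <;> ring
  map_smul' r v := by
    ext i j; fin_cases i <;> fin_cases j <;> simp <;> ring

lemma auxH_surj (M : Matrix (Fin 2) (Fin 2) ℂ) (hM : M.IsHermitian) : ∃ v, auxH v = M := by
  refine ⟨![(M 0 0).re, (M 1 1).re, (M 0 1).re, (M 0 1).im], ?_⟩
  have h := fun i j => hM.apply i j
  have h00 := congrArg Complex.im (h 0 0)
  have h11 := congrArg Complex.im (h 1 1)
  have h10 := h 1 0
  simp at h00 h11
  ext i j; fin_cases i <;> fin_cases j <;> simp [auxH]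
  · apply Complex.ext <;> simp; linarith
  · rw [← h10]; apply Complex.ext <;> simp
  · apply Complex.ext <;> simp; linarith

def auxPhi {n : ℕ} (X : Matrix (Fin n × Fin n) (Fin 2) ℂ) :
    (Fin 4 → ℝ) →ₗ[ℝ] Matrix (Fin n × Fin n) (Fin n × Fin n) ℂ where
  toFun v := X * auxH v * Xᴴ
  map_add' v w := by simp [Matrix.mul_add, Matrix.add_mul]
  map_smul' r v := by simp

def auxT (n : ℕ) : Matrix (Fin n × Fin n) (Fin n × Fin n) ℂ →ₗ[ℝ] Matrix (Fin n) (Fin n) ℂ where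
  toFun D := Matrix.of fun i j => ∑ k, D (i, k) (j, k)
  map_add' v w := by ext i j; simp [Finset.sum_add_distrib]
  map_smul' r v := by ext i j; simp [Finset.mul_sum]

def auxV {n : ℕ} (X : Matrix (Fin n × Fin n) (Fin 2) ℂ) (k : Fin 2) : Matrix (Fin n) (Fin n) ℂ :=
  Matrix.of fun i a => X (i, a) k

lemma aux_L {n : ℕ} (X : Matrix (Fin n × Fin n) (Fin 2) ℂ) (v : Fin 4 → ℝ) :
    auxT n (auxPhi X v) = ∑ k, ∑ l, auxH v k l • (auxV X k * (auxV X l)ᴴ) := by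
  ext i j
  simp [auxT, auxPhi, auxV, Matrix.mul_apply, Fin.sum_univ_two, Finset.mul_sum,
    ← Finset.sum_add_distrib]
  apply Finset.sum_congr rfl
  intros; ring

lemma aux_indep {n : ℕ} (X : Matrix (Fin n × Fin n) (Fin 2) ℂ) (Y : Matrix (Fin 2) (Fin n × Fin n) ℂ)
    (hYX : Y * X = 1) (hL : ∀ v, ∃ c : ℝ, c • (1 : Matrix (Fin n) (Fin n) ℂ) = auxT n (auxPhi X v)) :
    False := by
  obtain ⟨c, hc⟩ := hL ![1, 0, 0, 0]
  obtain ⟨d, hd⟩ := hL ![0, 0, 1, 0]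
  obtain ⟨e, he⟩ := hL ![0, 0, 0, 1]
  rw [aux_L] at hc hd he
  simp [Fin.sum_univ_two, auxH] at hc hd he
  set V := auxV X 0 with hV
  set U := auxV X 1 with hU
  have hUV : ∃ z : ℂ, U * Vᴴ = z • (1 : Matrix (Fin n) (Fin n) ℂ) := by
    refine ⟨(d + e * Complex.I) / 2, ?_⟩
    have hd' : (d : ℂ) • (1 : Matrix (Fin n) (Fin n) ℂ) = V * Uᴴ + U * Vᴴ := by
      rw [← hd]; ext i j; simp
    have he' : (e : ℂ) • (1 : Matrix (Fin n) (Fin n) ℂ)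
        = Complex.I • (V * Uᴴ) + -(Complex.I • (U * Vᴴ)) := by
      rw [← he]; ext i j; simp
    have : ((d + e * Complex.I) / 2) • (1 : Matrix (Fin n) (Fin n) ℂ)
      = (1 / 2 : ℂ) • ((d : ℂ) • (1 : Matrix (Fin n) (Fin n) ℂ)) +
        (Complex.I / 2) • ((e : ℂ) • (1 : Matrix (Fin n) (Fin n) ℂ)) := by
      rw [smul_smul, smul_smul, ← add_smul]; congr 1; ring
    rw [this, hd', he']
    ext i j
    simp only [Matrix.add_apply, Matrix.smul_apply, Matrix.neg_apply, smul_eq_mul]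
    linear_combination (-(V * Uᴴ) i j + (U * Vᴴ) i j) / 2 * Complex.I_mul_I
  obtain ⟨z, hz⟩ := hUV
  have hc' : V * Vᴴ = (c : ℂ) • (1 : Matrix (Fin n) (Fin n) ℂ) := by
    rw [← hc]; ext i j; simp
  have h00 := congrFun (congrFun hYX 0) 0
  have h11 := congrFun (congrFun hYX 1) 1
  have h10 := congrFun (congrFun hYX 1) 0
  simp [Matrix.mul_apply] at h00 h11 h10
  have hV0 : ∀ p : Fin n × Fin n, X p 0 = V p.1 p.2 := fun p => rfl
  have hU0 : ∀ p : Fin n × Fin n, X p 1 = U p.1 p.2 := fun p => rfl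
  by_cases hc0 : (c : ℂ) = 0
  · rw [hc0, zero_smul, Matrix.self_mul_conjTranspose_eq_zero] at hc'
    simp [hV0, hc'] at h00
  · have h1 : V * ((c : ℂ)⁻¹ • Vᴴ) = 1 := by
      rw [Matrix.mul_smul, hc', smul_smul, inv_mul_cancel₀ hc0, one_smul]
    have h2 := mul_eq_one_comm.1 h1
    have h3 : U = ((c : ℂ)⁻¹ * z) • V := by
      calc U = U * (((c : ℂ)⁻¹ • Vᴴ) * V) := by rw [h2, Matrix.mul_one]
        _ = (c : ℂ)⁻¹ • ((U * Vᴴ) * V) := by simp [Matrix.mul_assoc]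
        _ = _ := by rw [hz]; simp [smul_smul]
    have h4 : ∀ p, X p 1 = ((c : ℂ)⁻¹ * z) * X p 0 := fun p => by
      rw [hV0, hU0, h3]; simp
    have : ∑ p, Y 1 p * X p 1 = ((c : ℂ)⁻¹ * z) * ∑ p, Y 1 p * X p 0 := by
      rw [Finset.mul_sum]
      refine Finset.sum_congr rfl fun p _ => ?_
      rw [h4]; ring
    rw [h10, h11] at this
    simp at this

/-- If `n ≥ 3` and `A ∈ C_n` has rank 2, then the face of `C_n` generated by `A`
has dimension 0, 1 or 2. -/
theorem faceDim_rank_two_n_ge_three (n : ℕ) (hn : 3 ≤ n)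
    (A : Matrix (Fin n × Fin n) (Fin n × Fin n) ℂ)
    (hA : A ∈ Cset n) (hrank : A.rank = 2) :
    faceDim (faceGen (Cset n) A) = 0 ∨ faceDim (faceGen (Cset n) A) = 1 ∨
      faceDim (faceGen (Cset n) A) = 2 := by
  suffices h : faceDim (faceGen (Cset n) A) ≤ 2 by omega
  obtain ⟨X, Y, hYX, hXY⟩ := aux_factor A hrank
  have hsub : faceGen (Cset n) A ⊆ {B | B ∈ Cset n ∧ (1 - X * Y) * B = 0} :=
    Set.sInter_subset_of_mem ⟨aux_face _, hA, by rw [Matrix.sub_mul, hXY, Matrix.one_mul, sub_self]⟩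
  have hrep : ∀ D : Matrix (Fin n × Fin n) (Fin n × Fin n) ℂ, D.IsHermitian →
      (1 - X * Y) * D = 0 → ∃ v, auxPhi X v = D := by
    intro D hD h
    obtain ⟨v, hv⟩ := auxH_surj (Y * D * Yᴴ) (Matrix.isHermitian_mul_mul_conjTranspose Y hD)
    have h1 : X * Y * D = D := by
      rw [Matrix.sub_mul, Matrix.one_mul, sub_eq_zero] at h; exact h.symm
    have h2 : D * (Yᴴ * Xᴴ) = D := by
      have := congrArg Matrix.conjTranspose h1
      simpa [Matrix.conjTranspose_mul, hD.eq] using this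
    refine ⟨v, ?_⟩
    change X * auxH v * Xᴴ = D
    rw [hv]
    calc X * (Y * D * Yᴴ) * Xᴴ = (X * Y * D) * (Yᴴ * Xᴴ) := by simp only [Matrix.mul_assoc]
      _ = D := by rw [h1, h2]
  set L := auxT n ∘ₗ auxPhi X with hLdef
  have hspan : vectorSpan ℝ (faceGen (Cset n) A) ≤ (LinearMap.ker L).map (auxPhi X) := by
    rw [vectorSpan_def, Submodule.span_le]
    rintro _ ⟨B, hB, B', hB', rfl⟩
    obtain ⟨⟨hB1, hB2⟩, hB3⟩ := hsub hB
    obtain ⟨⟨hB1', hB2'⟩, hB3'⟩ := hsub hB'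
    obtain ⟨v, hv⟩ := hrep (B - B') (hB1.1.sub hB1'.1) (by rw [Matrix.mul_sub, hB3, hB3', sub_zero])
    refine ⟨v, ?_, hv⟩
    change auxT n (auxPhi X v) = 0
    rw [hv]
    ext i j
    simp [auxT, hB2, hB2']
  have hker : Module.finrank ℝ (LinearMap.ker L) ≤ 2 := by
    have hrn := LinearMap.finrank_range_add_finrank_ker L
    rw [Module.finrank_fin_fun] at hrn
    by_contra hcon
    have hr : Module.finrank ℝ (LinearMap.range L) ≤ 1 := by omega
    apply aux_indep X Y hYX
    obtain ⟨v0, hv0⟩ := hrep A hA.1.1 (by rw [Matrix.sub_mul, hXY, Matrix.one_mul, sub_self])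
    have h1 : L v0 = 1 := by
      change auxT n (auxPhi X v0) = 1
      rw [hv0]; ext i j
      simp [auxT, hA.2, Matrix.one_apply]
    haveI : Nonempty (Fin n) := ⟨⟨0, by omega⟩⟩
    obtain ⟨w, hw⟩ := finrank_le_one_iff.1 hr
    obtain ⟨c0, hc0⟩ := hw ⟨L v0, LinearMap.mem_range_self _ _⟩
    have hc0' : c0 • (w : Matrix (Fin n) (Fin n) ℂ) = 1 := by
      rw [← h1]; exact congrArg Subtype.val hc0
    have hne : c0 ≠ 0 := by
      rintro rfl
      rw [zero_smul] at hc0'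
      exact zero_ne_one hc0'
    intro v
    obtain ⟨c, hc⟩ := hw ⟨L v, LinearMap.mem_range_self _ _⟩
    refine ⟨c * c0⁻¹, ?_⟩
    rw [← hc0', smul_smul, mul_assoc, inv_mul_cancel₀ hne, mul_one]
    exact congrArg Subtype.val hc
  calc faceDim (faceGen (Cset n) A) ≤ Module.finrank ℝ ((LinearMap.ker L).map (auxPhi X)) :=
        Submodule.finrank_mono hspan
    _ ≤ Module.finrank ℝ (LinearMap.ker L) := Submodule.finrank_map_le _ _
    _ ≤ 2 := hker
end
end

section
/- There exist matrices A and A′ in C_2, each of rank 2, such that the face of C_2 generated by A has dimension 0 (i.e., A is an extreme point of C_2) and the face of C_2 generated by A′ has dimension 2. -/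
open Matrix
open scoped ComplexOrder

noncomputable section

abbrev Mx := Matrix (Fin 2 × Fin 2) (Fin 2 × Fin 2) ℂ

lemma psd_zero_row {B : Mx} (hB : B.PosSemidef) {p : Fin 2 × Fin 2} (hp : B p p = 0)
    (q : Fin 2 × Fin 2) : B p q = 0 ∧ B q p = 0 := by
  have h1 := (hB.submatrix ![p, q]).det_nonneg
  have h2 : B q p = star (B p q) := (hB.1.apply q p).symm
  rw [Matrix.det_fin_two] at h1
  simp only [Matrix.submatrix_apply, Matrix.cons_val_zero, Matrix.cons_val_one, hp, h2] at h1
  have h3 : B p q = 0 := by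
    have h4 : (0 : ℝ) ≤ - Complex.normSq (B p q) := by
      have : (0 : ℂ) * B q q - B p q * star (B p q)
          = ((- Complex.normSq (B p q) : ℝ) : ℂ) := by
        rw [Complex.star_def, Complex.mul_conj]; push_cast; ring
      rw [this] at h1
      exact_mod_cast h1
    exact Complex.normSq_eq_zero.1 (le_antisymm (by linarith) (Complex.normSq_nonneg _))
  exact ⟨h3, by rw [h2, h3, star_zero]⟩

def FS (S : Set (Fin 2 × Fin 2)) : Set Mx := {B | B ∈ Cset 2 ∧ ∀ p, p ∉ S → B p p = 0}

lemma Cset_convex : Convex ℝ (Cset 2) := by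
  intro x hx y hy a b ha hb hab
  refine ⟨(hx.1.smul ha).add (hy.1.smul hb), fun i j => ?_⟩
  have h1 := hx.2 i j
  have h2 := hy.2 i j
  simp only [Matrix.add_apply, Matrix.smul_apply, Finset.sum_add_distrib, ← Finset.smul_sum,
    h1, h2, ← add_smul, hab, one_smul]

lemma FS_face (S : Set (Fin 2 × Fin 2)) : IsFace (Cset 2) (FS S) := by
  refine ⟨fun B h => h.1, ?_, ?_⟩
  · intro x hx y hy a b ha hb hab
    refine ⟨Cset_convex hx.1 hy.1 ha hb hab, fun p hp => ?_⟩
    simp [Matrix.add_apply, Matrix.smul_apply, hx.2 p hp, hy.2 p hp]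
  · intro x hx y hy t ht ht1 h
    have key : ∀ p, p ∉ S → x p p = 0 ∧ y p p = 0 := by
      intro p hp
      have h0 := h.2 p hp
      simp only [Matrix.add_apply, Matrix.smul_apply] at h0
      have hxp : 0 ≤ x p p := hx.1.diag_nonneg
      have hyp : 0 ≤ y p p := hy.1.diag_nonneg
      have e1 : 0 ≤ t • x p p := smul_nonneg ht.le hxp
      have e2 : 0 ≤ (1 - t) • y p p := smul_nonneg (by linarith) hyp
      have := (add_eq_zero_iff_of_nonneg e1 e2).1 h0
      have ht1' : (1 - t) ≠ 0 := by linarith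
      exact ⟨(smul_eq_zero.1 this.1).resolve_left ht.ne',
        (smul_eq_zero.1 this.2).resolve_left ht1'⟩
    exact ⟨⟨hx, fun p hp => (key p hp).1⟩, ⟨hy, fun p hp => (key p hp).2⟩⟩

lemma mem_faceGen_of {A H : Mx} (h1 : A + H ∈ Cset 2) (h2 : A - H ∈ Cset 2) :
    A + H ∈ faceGen (Cset 2) A := by
  rintro F ⟨hF, hA⟩
  refine (hF.2.2 _ h1 _ h2 (1/2) (by norm_num) (by norm_num) ?_).1
  have : (1/2 : ℝ) • (A + H) + (1 - 1/2 : ℝ) • (A - H) = A := by module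
  rwa [this]

def dA : Fin 2 × Fin 2 → ℂ := fun p => if p.2 = 0 then 1 else 0
def dB : Fin 2 × Fin 2 → ℂ := fun p => if p.1 = p.2 then 1 else 0

def HX : Mx := fun p q => if p = (0,0) ∧ q = (1,1) ∨ p = (1,1) ∧ q = (0,0) then 1 else 0
def HY : Mx := fun p q => if p = (0,0) ∧ q = (1,1) then Complex.I else
  if p = (1,1) ∧ q = (0,0) then -Complex.I else 0

def vv (c : ℂ) : Fin 2 × Fin 2 → ℂ := fun p => if p = (0,0) then 1 else if p = (1,1) then c else 0

lemma vv_mem (c : ℂ) (hc : c * star c = 1) : vecMulVec (vv c) (star (vv c)) ∈ Cset 2 := by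
  refine ⟨posSemidef_vecMulVec_self_star _, fun i j => ?_⟩
  fin_cases i <;> fin_cases j <;> simp [vecMulVec_apply, vv, Fin.sum_univ_two] 
  simpa using hc

lemma dB_eq (c : ℂ) (hc : c * star c = 1) (H : Mx)
   (h : ∀ p q, H p q = if p = (0,0) ∧ q = (1,1) then star c else if p = (1,1) ∧ q = (0,0) then c else 0) :
    diagonal dB + H ∈ Cset 2 := by
  convert vv_mem c hc using 1
  ext ⟨a, b⟩ ⟨a', b'⟩
  rw [Matrix.add_apply, h]
  fin_cases a <;> fin_cases b <;> fin_cases a' <;> fin_cases b' <;>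
    simp [vecMulVec_apply, vv, dB, diagonal_apply] 
  simpa using hc.symm

lemma dA_mem : diagonal dA ∈ Cset 2 := by
  refine ⟨posSemidef_diagonal_iff.2 fun p => ?_, fun i j => ?_⟩
  · unfold dA; split_ifs <;> simp
  · fin_cases i <;> fin_cases j <;> simp [dA, diagonal_apply]

lemma dB_mem : diagonal dB ∈ Cset 2 := by
  refine ⟨posSemidef_diagonal_iff.2 fun p => ?_, fun i j => ?_⟩
  · unfold dB; split_ifs <;> simp
  · fin_cases i <;> fin_cases j <;> simp [dB, diagonal_apply]

lemma FSA {B : Mx} (h : B ∈ FS {p | p.2 = 0}) : B = diagonal dA := by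
  obtain ⟨⟨hp, ht⟩, hz⟩ := h
  have z : ∀ i q, B (i, 1) q = 0 ∧ B q (i, 1) = 0 := fun i q =>
    psd_zero_row hp (hz (i, 1) (by simp)) q
  have t : ∀ i j, B (i, 0) (j, 0) = if i = j then 1 else 0 := by
    intro i j
    have := ht i j
    rwa [Fin.sum_univ_two, (z i _).1, add_zero] at this
  ext ⟨a, b⟩ ⟨a', b'⟩
  fin_cases b <;> fin_cases b' <;> simp [z, t, dA, diagonal_apply]

lemma FSB {B : Mx} (h : B ∈ FS {p | p.1 = p.2}) :
    B = diagonal dB + (B (0,0) (1,1)).re • HX + (B (0,0) (1,1)).im • HY := by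
  obtain ⟨⟨hp, ht⟩, hz⟩ := h
  have z1 : ∀ q, B (0, 1) q = 0 ∧ B q (0, 1) = 0 := fun q =>
    psd_zero_row hp (hz (0, 1) (by simp)) q
  have z2 : ∀ q, B (1, 0) q = 0 ∧ B q (1, 0) = 0 := fun q =>
    psd_zero_row hp (hz (1, 0) (by simp)) q
  have t0 : B (0,0) (0,0) = 1 := by
    have := ht 0 0
    rwa [Fin.sum_univ_two, (z1 _).1, add_zero] at this
  have t1 : B (1,1) (1,1) = 1 := by
    have := ht 1 1
    rwa [Fin.sum_univ_two, (z2 _).1, zero_add] at this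
  have hs : B (1,1) (0,0) = star (B (0,0) (1,1)) := (hp.1.apply _ _).symm
  ext ⟨a, b⟩ ⟨a', b'⟩
  fin_cases a <;> fin_cases b <;> fin_cases a' <;> fin_cases b' <;>
    simp [z1, z2, t0, t1, dB, diagonal_apply, HX, HY]
  · rw [hs]; apply Complex.ext <;> simp

lemma faceB_mem {H : Mx} (h : H = HX ∨ H = HY) : H ∈ vectorSpan ℝ (faceGen (Cset 2) (diagonal dB)) := by
  have hA : diagonal dB ∈ faceGen (Cset 2) (diagonal dB) := fun F hF => hF.2
  have hH : diagonal dB + H ∈ faceGen (Cset 2) (diagonal dB) := by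
    rcases h with rfl | rfl
    · apply mem_faceGen_of
      · exact dB_eq 1 (by simp) _ (by intro p q; simp only [HX]; split_ifs <;> simp_all)
      · rw [sub_eq_add_neg]
        exact dB_eq (-1) (by simp) _ (by intro p q; simp only [HX, Matrix.neg_apply]; split_ifs <;> simp_all)
    · apply mem_faceGen_of
      · exact dB_eq (-Complex.I) (by simp) _ (by intro p q; simp only [HY]; split_ifs <;> simp_all)
      · rw [sub_eq_add_neg]
        exact dB_eq (Complex.I) (by simp) _ (by intro p q; simp only [HY, Matrix.neg_apply]; split_ifs <;> simp_all)
  have := vsub_mem_vectorSpan ℝ hH hA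
  simpa using this

lemma spanB : vectorSpan ℝ (faceGen (Cset 2) (diagonal dB)) = Submodule.span ℝ (Set.range ![HX, HY]) := by
  apply le_antisymm
  · rw [vectorSpan_def, Submodule.span_le]
    rintro _ ⟨B, hB, C, hC, rfl⟩
    have m : diagonal dB ∈ FS {p | p.1 = p.2} := ⟨dB_mem, fun p hp => by
      have : p.1 ≠ p.2 := hp
      simp [dB, this]⟩
    have hB' := FSB (hB _ ⟨FS_face _, m⟩)
    have hC' := FSB (hC _ ⟨FS_face _, m⟩)
    have hX : HX ∈ Submodule.span ℝ (Set.range ![HX, HY]) := Submodule.subset_span ⟨0, rfl⟩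
    have hY : HY ∈ Submodule.span ℝ (Set.range ![HX, HY]) := Submodule.subset_span ⟨1, rfl⟩
    have : B - C = ((B (0,0) (1,1)).re - (C (0,0) (1,1)).re) • HX
        + ((B (0,0) (1,1)).im - (C (0,0) (1,1)).im) • HY := by
      generalize (B (0,0) (1,1)).re = a at *
      generalize (B (0,0) (1,1)).im = b at *
      generalize (C (0,0) (1,1)).re = c at *
      generalize (C (0,0) (1,1)).im = d at *
      rw [hB', hC']; module
    show B - C ∈ _
    rw [this]
    exact add_mem (Submodule.smul_mem _ _ hX) (Submodule.smul_mem _ _ hY)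
  · rw [Submodule.span_le]
    rintro _ ⟨i, rfl⟩
    fin_cases i
    · exact faceB_mem (Or.inl rfl)
    · exact faceB_mem (Or.inr rfl)

lemma indB : LinearIndependent ℝ ![HX, HY] := by
  rw [LinearIndependent.pair_iff]
  intro s t h
  have h1 := congrFun (congrFun h (0,0)) (1,1)
  simp [HX, HY] at h1
  have hr := congrArg Complex.re h1
  have hi := congrArg Complex.im h1
  simp at hr hi
  exact ⟨hr, hi⟩

/-- There exist rank-2 matrices in `C_2` generating faces of dimension 0 and 2,
respectively. -/
theorem exists_rank_two_faces_n_eq_two :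
    ∃ A A' : Matrix (Fin 2 × Fin 2) (Fin 2 × Fin 2) ℂ,
      A ∈ Cset 2 ∧ A' ∈ Cset 2 ∧ A.rank = 2 ∧ A'.rank = 2 ∧
      faceDim (faceGen (Cset 2) A) = 0 ∧ faceDim (faceGen (Cset 2) A') = 2 := by
  refine ⟨diagonal dA, diagonal dB, dA_mem, dB_mem, ?_, ?_, ?_, ?_⟩
  · classical
    rw [rank_diagonal, Fintype.card_subtype]
    simp only [dA, ne_eq, ite_eq_right_iff, one_ne_zero, imp_false, not_not]
    decide
  · classical
    rw [rank_diagonal, Fintype.card_subtype]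
    simp only [dB, ne_eq, ite_eq_right_iff, one_ne_zero, imp_false, not_not]
    decide
  · have m : diagonal dA ∈ FS {p | p.2 = 0} := ⟨dA_mem, fun p hp => by
      have : p.2 ≠ 0 := hp
      simp [dA, this]⟩
    have hsub : (faceGen (Cset 2) (diagonal dA)).Subsingleton := by
      intro B hB C hC
      rw [FSA (hB _ ⟨FS_face _, m⟩), FSA (hC _ ⟨FS_face _, m⟩)]
    unfold faceDim
    rw [vectorSpan_of_subsingleton ℝ hsub]
    simp
  · unfold faceDim
    rw [spanB, finrank_span_eq_card indB]
    simp
end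
end

section
/- For every integer n ≥ 3 and every d ∈ {0, 1, 2}, there exists a matrix A ∈ C_n with rank A = 2 such that the face of C_n generated by A has dimension exactly d. -/
open Matrix
open scoped ComplexOrder

noncomputable section

namespace FaceAux

variable {n : ℕ}

/-- Sum of block traces. -/
def bt (B : Matrix (Fin n × Fin n) (Fin n × Fin n) ℂ) (i j : Fin n) : ℂ :=
  ∑ k : Fin n, B (i, k) (j, k)

/-- Hermitian directions. -/
def S (K : Matrix (Fin n × Fin n) (Fin 2) ℂ) : Submodule ℝ (Matrix (Fin 2) (Fin 2) ℂ) where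
  carrier := {H | H.IsHermitian ∧ ∀ i j, bt (K * H * Kᴴ) i j = 0}
  add_mem' := by
    rintro a b ⟨ha, ha'⟩ ⟨hb, hb'⟩
    refine ⟨ha.add hb, fun i j => ?_⟩
    have h1 := ha' i j
    have h2 := hb' i j
    simp only [bt] at *
    simp only [Matrix.mul_add, Matrix.add_mul, Matrix.add_apply, Finset.sum_add_distrib, h1, h2,
      add_zero]
  zero_mem' := by
    refine ⟨Matrix.isHermitian_zero, fun i j => by simp [bt]⟩
  smul_mem' := by
    rintro c a ⟨ha, ha'⟩
    refine ⟨?_, fun i j => ?_⟩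
    · unfold Matrix.IsHermitian at *
      rw [Matrix.conjTranspose_smul, ha]; simp
    · have h1 := ha' i j
      simp only [bt] at *
      simp only [Matrix.mul_smul, Matrix.smul_mul, Matrix.smul_apply, ← Finset.smul_sum, h1,
        smul_zero]

/-- The lift. -/
def lift (K : Matrix (Fin n × Fin n) (Fin 2) ℂ) :
    Matrix (Fin 2) (Fin 2) ℂ →ₗ[ℝ] Matrix (Fin n × Fin n) (Fin n × Fin n) ℂ where
  toFun H := K * H * Kᴴ
  map_add' := by intro a b; simp [Matrix.mul_add, Matrix.add_mul]
  map_smul' := by intro a b; simp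

lemma lift_inj (K : Matrix (Fin n × Fin n) (Fin 2) ℂ) (J : Matrix (Fin 2) (Fin n × Fin n) ℂ)
    (hJ : J * K = 1) : Function.Injective (lift K) := by
  have hJ' : Kᴴ * Jᴴ = 1 := by rw [← Matrix.conjTranspose_mul, hJ]; simp
  have key : ∀ H : Matrix (Fin 2) (Fin 2) ℂ, J * (K * H * Kᴴ) * Jᴴ = H := by
    intro H
    calc J * (K * H * Kᴴ) * Jᴴ = (J * K) * H * (Kᴴ * Jᴴ) := by simp only [Matrix.mul_assoc]
      _ = H := by rw [hJ, hJ']; simp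
  intro a b h
  have h' : K * a * Kᴴ = K * b * Kᴴ := h
  rw [← key a, ← key b, h']

/-- Exposed candidate face. -/
def Fc (K : Matrix (Fin n × Fin n) (Fin 2) ℂ) :
    Set (Matrix (Fin n × Fin n) (Fin n × Fin n) ℂ) :=
  {B | B ∈ Cset n ∧ ∀ u, Kᴴ *ᵥ u = 0 → B *ᵥ u = 0}

lemma convex_Cset : Convex ℝ (Cset n) := by
  intro x hx y hy a b ha hb hab
  refine ⟨(hx.1.smul ha).add (hy.1.smul hb), fun i j => ?_⟩
  have h1 := hx.2 i j
  have h2 := hy.2 i j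
  simp only [Matrix.add_apply, Matrix.smul_apply, Finset.sum_add_distrib, ← Finset.smul_sum,
    h1, h2]
  rw [← add_smul, hab, one_smul]

lemma isFace_Fc (K : Matrix (Fin n × Fin n) (Fin 2) ℂ) : IsFace (Cset n) (Fc K) := by
  refine ⟨fun B hB => hB.1, ?_, ?_⟩
  · intro x hx y hy a b ha hb hab
    refine ⟨convex_Cset hx.1 hy.1 ha hb hab, fun u hu => ?_⟩
    rw [Matrix.add_mulVec, Matrix.smul_mulVec, Matrix.smul_mulVec, hx.2 u hu, hy.2 u hu]
    simp
  · intro x hx y hy t ht ht1 hF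
    have main : ∀ u, Kᴴ *ᵥ u = 0 → x *ᵥ u = 0 ∧ y *ᵥ u = 0 := by
      intro u hu
      have h0 := hF.2 u hu
      have h1 : star u ⬝ᵥ ((t • x + (1 - t) • y) *ᵥ u) = 0 := by rw [h0]; simp
      rw [Matrix.add_mulVec, Matrix.smul_mulVec, Matrix.smul_mulVec, dotProduct_add,
        dotProduct_smul, dotProduct_smul] at h1
      have px := hx.1.dotProduct_mulVec_nonneg u
      have py := hy.1.dotProduct_mulVec_nonneg u
      have px' := smul_nonneg ht.le px
      have py' := smul_nonneg (sub_pos.2 ht1).le py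
      obtain ⟨e1, e2⟩ := (add_eq_zero_iff_of_nonneg px' py').1 h1
      rw [smul_eq_zero] at e1 e2
      constructor
      · rcases e1 with e | e
        · exact absurd e ht.ne'
        · exact (hx.1.dotProduct_mulVec_zero_iff u).1 e
      · rcases e2 with e | e
        · exact absurd e (sub_pos.2 ht1).ne'
        · exact (hy.1.dotProduct_mulVec_zero_iff u).1 e
    exact ⟨⟨hx, fun u hu => (main u hu).1⟩, ⟨hy, fun u hu => (main u hu).2⟩⟩

lemma Fc_form (K : Matrix (Fin n × Fin n) (Fin 2) ℂ) (J : Matrix (Fin 2) (Fin n × Fin n) ℂ)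
    (hJ : J * K = 1) {B} (hB : B ∈ Fc K) : B = K * (J * B * Jᴴ) * Kᴴ := by
  have hJ' : Kᴴ * Jᴴ = 1 := by rw [← Matrix.conjTranspose_mul, hJ]; simp
  have h1 : B * (Jᴴ * Kᴴ) = B := by
    have : B * (1 - Jᴴ * Kᴴ) = 0 := by
      apply Matrix.ext_of_mulVec_single
      intro u
      rw [← Matrix.mulVec_mulVec, hB.2]
      · rw [Matrix.zero_mulVec]
      rw [Matrix.mulVec_mulVec, Matrix.mul_sub, ← Matrix.mul_assoc, hJ', Matrix.mul_one,
        Matrix.one_mul, sub_self, Matrix.zero_mulVec]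
    rw [Matrix.mul_sub, Matrix.mul_one, sub_eq_zero] at this
    exact this.symm
  have h2 : (K * J) * B = B := by
    have := congrArg Matrix.conjTranspose h1
    simpa [Matrix.conjTranspose_mul, hB.1.1.isHermitian.eq] using this
  calc B = (K * J) * (B * (Jᴴ * Kᴴ)) := by rw [h1, h2]
    _ = _ := by simp only [Matrix.mul_assoc]

section
open scoped MatrixOrder Matrix.Norms.L2Operator

lemma exists_eps (H : Matrix (Fin 2) (Fin 2) ℂ) (hH : H.IsHermitian) :
    ∃ e : ℝ, 0 < e ∧ (1 + e • H).PosSemidef ∧ (1 - e • H).PosSemidef := by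
  have hs : IsSelfAdjoint H := hH
  have key : ∀ X : Matrix (Fin 2) (Fin 2) ℂ, IsSelfAdjoint X →
      (1 + (‖X‖ + 1)⁻¹ • X).PosSemidef := by
    intro X hX
    have h1 := IsSelfAdjoint.neg_algebraMap_norm_le_self (a := X) hX
    rw [Matrix.le_iff, sub_neg_eq_add, Algebra.algebraMap_eq_smul_one] at h1
    have hp : (0:ℝ) < ‖X‖ + 1 := by positivity
    have h2 := (h1.add (Matrix.PosSemidef.one)).smul (inv_pos.2 hp).le
    have h3 : 1 + (‖X‖ + 1)⁻¹ • X = (‖X‖ + 1)⁻¹ • (X + ‖X‖ • (1 : Matrix (Fin 2) (Fin 2) ℂ) + 1) := by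
     rw [show X + ‖X‖ • (1 : Matrix (Fin 2) (Fin 2) ℂ) + 1 = X + (‖X‖ + 1) • 1 by
      rw [add_smul, one_smul, add_assoc], smul_add, smul_smul, inv_mul_cancel₀ hp.ne', one_smul,
      add_comm]
    rw [h3]
    exact h2
  refine ⟨(‖H‖ + 1)⁻¹, by positivity, key H hs, ?_⟩
  have := key (-H) hs.neg
  rwa [norm_neg, smul_neg, ← sub_eq_add_neg] at this

end

lemma vectorSpan_eq (K : Matrix (Fin n × Fin n) (Fin 2) ℂ) (J : Matrix (Fin 2) (Fin n × Fin n) ℂ)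
    (hJ : J * K = 1) (hC : ∀ i j : Fin n, bt (K * Kᴴ) i j = if i = j then 1 else 0) :
    vectorSpan ℝ (faceGen (Cset n) (K * Kᴴ)) = (S K).map (lift K) := by
  have hA : K * Kᴴ ∈ Cset n := ⟨Matrix.posSemidef_self_mul_conjTranspose K, hC⟩
  have hAF : K * Kᴴ ∈ Fc K := ⟨hA, fun u hu => by rw [← Matrix.mulVec_mulVec, hu]; simp⟩
  apply le_antisymm
  · rw [vectorSpan_def, Submodule.span_le]
    rintro _ ⟨x, hx, y, hy, rfl⟩
    have hx' : x ∈ Fc K := hx _ ⟨isFace_Fc K, hAF⟩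
    have hy' : y ∈ Fc K := hy _ ⟨isFace_Fc K, hAF⟩
    have ex := Fc_form K J hJ hx'
    have ey := Fc_form K J hJ hy'
    have e : K * (J * x * Jᴴ - J * y * Jᴴ) * Kᴴ = x - y := by
      rw [Matrix.mul_sub, Matrix.sub_mul, ← ex, ← ey]
    refine ⟨J * x * Jᴴ - J * y * Jᴴ, ⟨?_, ?_⟩, e⟩
    · exact (Matrix.isHermitian_mul_mul_conjTranspose J hx'.1.1.isHermitian).sub
        (Matrix.isHermitian_mul_mul_conjTranspose J hy'.1.1.isHermitian)
    · intro i j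
      rw [e]
      simp only [bt, Matrix.sub_apply, Finset.sum_sub_distrib]
      rw [hx'.1.2, hy'.1.2, sub_self]
  · rintro _ ⟨H, ⟨hH, hT⟩, rfl⟩
    obtain ⟨e, he, h1, h2⟩ := exists_eps H hH
    have f1 : K * (1 + e • H) * Kᴴ = K * Kᴴ + e • (K * H * Kᴴ) := by
      simp [Matrix.mul_add, Matrix.add_mul]
    have f2 : K * (1 - e • H) * Kᴴ = K * Kᴴ - e • (K * H * Kᴴ) := by
      simp [Matrix.mul_sub, Matrix.sub_mul]
    have c1 : K * Kᴴ + e • (K * H * Kᴴ) ∈ Cset n := by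
      refine ⟨f1 ▸ h1.mul_mul_conjTranspose_same K, fun i j => ?_⟩
      have := hT i j
      have := hC i j
      simp only [bt] at *
      simp only [Matrix.add_apply, Matrix.smul_apply, Finset.sum_add_distrib, ← Finset.smul_sum, *]
      simp
    have c2 : K * Kᴴ - e • (K * H * Kᴴ) ∈ Cset n := by
      refine ⟨f2 ▸ h2.mul_mul_conjTranspose_same K, fun i j => ?_⟩
      have := hT i j
      have := hC i j
      simp only [bt] at *
      simp only [Matrix.sub_apply, Matrix.smul_apply, Finset.sum_sub_distrib, ← Finset.smul_sum, *]
      simp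
    have mid : (1/2 : ℝ) • (K * Kᴴ + e • (K * H * Kᴴ)) +
        (1 - 1/2 : ℝ) • (K * Kᴴ - e • (K * H * Kᴴ)) = K * Kᴴ := by
      module
    have g1 : K * Kᴴ + e • (K * H * Kᴴ) ∈ faceGen (Cset n) (K * Kᴴ) := by
      rintro F ⟨hF, hAF⟩
      exact (hF.2.2 _ c1 _ c2 (1/2) (by norm_num) (by norm_num) (by rw [mid]; exact hAF)).1
    have g0 : K * Kᴴ ∈ faceGen (Cset n) (K * Kᴴ) := fun F hF => hF.2
    have := vsub_mem_vectorSpan ℝ g1 g0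
    rw [vsub_eq_sub, add_sub_cancel_left] at this
    have := Submodule.smul_mem _ e⁻¹ this
    rwa [smul_smul, inv_mul_cancel₀ he.ne', one_smul] at this

lemma main (K : Matrix (Fin n × Fin n) (Fin 2) ℂ) (J : Matrix (Fin 2) (Fin n × Fin n) ℂ)
    (hJ : J * K = 1) (hC : ∀ i j : Fin n, bt (K * Kᴴ) i j = if i = j then 1 else 0) (d : ℕ)
    (hd : Module.finrank ℝ (S K) = d) :
    ∃ A : Matrix (Fin n × Fin n) (Fin n × Fin n) ℂ,
      A ∈ Cset n ∧ A.rank = 2 ∧ faceDim (faceGen (Cset n) A) = d := by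
  refine ⟨K * Kᴴ, ⟨Matrix.posSemidef_self_mul_conjTranspose K, hC⟩, ?_, ?_⟩
  · rw [Matrix.rank_self_mul_conjTranspose]
    apply le_antisymm
    · simpa using Matrix.rank_le_card_width K
    · have := Matrix.rank_mul_le_right J K
      rw [hJ, Matrix.rank_one] at this
      simpa using this
  · rw [faceDim, vectorSpan_eq K J hJ hC, ← hd]
    exact (Submodule.equivMapOfInjective (lift K) (lift_inj K J hJ) (S K)).finrank_eq.symm

/-- Concrete matrices. -/
def KK (σ : Fin 2 → Fin n → Fin n) (x : Fin 2 → Fin n → ℂ) : Matrix (Fin n × Fin n) (Fin 2) ℂ :=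
  Matrix.of fun p a => if p.2 = σ a p.1 then x a p.1 else 0

lemma bt_KK (σ : Fin 2 → Fin n → Fin n) (x : Fin 2 → Fin n → ℂ) (H : Matrix (Fin 2) (Fin 2) ℂ)
    (i j : Fin n) : bt (KK σ x * H * (KK σ x)ᴴ) i j =
      ∑ a, ∑ b, H a b * (if σ a i = σ b j then x a i * star (x b j) else 0) := by
  have : ∀ a b, (if σ a i = σ b j then x a i * star (x b j) else 0) =
      ∑ k, KK σ x (i, k) a * star (KK σ x (j, k) b) := by
    intro a b
    simp only [KK, Matrix.of_apply]
    rw [Finset.sum_eq_single (σ a i)]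
    · by_cases h : σ a i = σ b j <;> simp [h]
    · intro k _ hk
      simp [hk]
    · simp
  simp only [this, bt, Matrix.mul_apply, Matrix.conjTranspose_apply, Fin.sum_univ_two,
    Finset.mul_sum, ← Finset.sum_add_distrib]
  exact Finset.sum_congr rfl fun k _ => by ring

lemma main' (σ : Fin 2 → Fin n → Fin n) (x : Fin 2 → Fin n → ℂ) (p : Fin 2 → Fin n × Fin n)
    (hJ : ∀ a b, KK σ x (p a) b = if a = b then 1 else 0)
    (hC : ∀ i j, ∑ a, (if σ a i = σ a j then x a i * star (x a j) else 0)
      = if i = j then 1 else 0) (d : ℕ)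
    (hd : Module.finrank ℝ (S (KK σ x)) = d) :
    ∃ A : Matrix (Fin n × Fin n) (Fin n × Fin n) ℂ,
      A ∈ Cset n ∧ A.rank = 2 ∧ faceDim (faceGen (Cset n) A) = d := by
  refine main (KK σ x) ((1 : Matrix _ _ ℂ).submatrix p id) ?_ ?_ d hd
  · ext a b
    rw [Matrix.mul_apply]
    simp [Matrix.one_apply, hJ]
  · intro i j
    have := bt_KK σ x 1 i j
    rw [Matrix.mul_one] at this
    rw [this, ← hC]
    simp [Matrix.one_apply]

lemma mem_S (σ : Fin 2 → Fin n → Fin n) (x : Fin 2 → Fin n → ℂ) (H : Matrix (Fin 2) (Fin 2) ℂ) :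
    H ∈ S (KK σ x) ↔ H.IsHermitian ∧ ∀ i j,
      ∑ a, ∑ b, H a b * (if σ a i = σ b j then x a i * star (x b j) else 0) = 0 := by
  simp only [← bt_KK]; rfl

end FaceAux

/-- For every `n ≥ 3` and every `d ∈ {0,1,2}` there is a rank-2 matrix in `C_n`
generating a face of dimension exactly `d`. -/
theorem exists_rank_two_face_of_dim (n : ℕ) (hn : 3 ≤ n) (d : ℕ)
    (hd : d ∈ ({0, 1, 2} : Set ℕ)) :
    ∃ A : Matrix (Fin n × Fin n) (Fin n × Fin n) ℂ,
      A ∈ Cset n ∧ A.rank = 2 ∧ faceDim (faceGen (Cset n) A) = d := by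
  obtain ⟨m, rfl⟩ : ∃ m, n = m + 3 := ⟨n - 3, by omega⟩
  have h01 : (0 : Fin (m+3)) ≠ 1 := by simp [Fin.ext_iff]
  have h02 : (0 : Fin (m+3)) ≠ 2 := by simp [Fin.ext_iff, Nat.mod_eq_of_lt (show 2 < m + 3 by omega)]
  have h12 : (1 : Fin (m+3)) ≠ 2 := by simp [Fin.ext_iff, Nat.mod_eq_of_lt (show 2 < m + 3 by omega)]
  rcases hd with rfl | rfl | rfl
  · refine FaceAux.main' ![id, fun i => if i = 1 then 0 else i]
      ![fun i => if i = 0 then 1 else 0, fun i => if i = 0 then 0 else 1] ![(0,0), (1,0)] ?_ ?_ 0 ?_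
    · intro a b
      fin_cases a <;> fin_cases b <;> simp [FaceAux.KK]
    · intro i j
      simp only [Fin.sum_univ_two]
      by_cases hi : i = 0 <;> by_cases hj : j = 0 <;> by_cases hi' : i = 1 <;>
        by_cases hj' : j = 1 <;> simp_all [eq_comm]
    · rw [Submodule.finrank_eq_zero, eq_bot_iff]
      intro H hH
      rw [FaceAux.mem_S] at hH
      obtain ⟨hh, hH⟩ := hH
      have a1 := hH 0 0
      have a2 := hH 1 1
      have a3 := hH 0 1
      have a4 := hH 1 0
      simp [Fin.sum_univ_two] at a1 a2 a3 a4
      rw [Submodule.mem_bot]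
      ext a b
      fin_cases a <;> fin_cases b <;> simp_all
  · refine FaceAux.main' ![id, id]
      ![fun i => if i = 1 then 0 else if i = 2 then 3/5 else 1,
        fun i => if i = 1 then 1 else if i = 2 then 4/5 else 0] ![(0,0), (1,1)] ?_ ?_ 1 ?_
    · intro a b
      fin_cases a <;> fin_cases b <;> simp [FaceAux.KK, h02]
    · intro i j
      simp only [Fin.sum_univ_two]
      by_cases hij : i = j
      · subst hij
        by_cases hi : i = 1
        · simp [hi]
        · by_cases hi' : i = 2
          · simp [hi', h12.symm]; norm_num
          · simp [hi, hi']
      · simp [hij]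
    · have : FaceAux.S (FaceAux.KK ![id, id]
          ![fun i : Fin (m+3) => if i = 1 then 0 else if i = 2 then 3/5 else 1,
            fun i => if i = 1 then 1 else if i = 2 then 4/5 else 0]) =
          Submodule.span ℝ {!![0, Complex.I; -Complex.I, 0]} := by
        ext H
        rw [FaceAux.mem_S, Submodule.mem_span_singleton]
        constructor
        · rintro ⟨hh, hH⟩
          have a1 := hH 0 0
          have a2 := hH 1 1
          have a3 := hH 2 2
          simp [Fin.sum_univ_two, h02, h12.symm] at a1 a2 a3
          have a4 := hh.apply 1 0
          have a5 : H 0 1 + H 1 0 = 0 := by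
            rw [a1, a2] at a3
            simp [map_ofNat] at a3
            linear_combination (25/12) * a3
          have a6 : (H 0 1).re = 0 := by
            rw [← a4] at a5
            have := congrArg Complex.re a5
            simp at this
            linarith
          have a7 : H 0 1 = (H 0 1).im * Complex.I := by
            apply Complex.ext <;> simp [a6]
          have a8 : H 1 0 = - H 0 1 := by linear_combination a5
          refine ⟨(H 0 1).im, ?_⟩
          ext a b
          fin_cases a <;> fin_cases b
          · simp [a1]
          · simp [← a7]
          · simp [a8, ← a7]
          · simp [a2]
        · rintro ⟨c, rfl⟩
          constructor
          · ext a b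
            fin_cases a <;> fin_cases b <;> simp
          · intro i j
            by_cases hij : i = j
            · subst hij
              by_cases hi : i = 1
              · simp [hi]
              · by_cases hi' : i = 2
                · simp [hi', h12.symm, map_ofNat]; ring
                · simp [hi, hi']
            · simp [hij]
      rw [this, finrank_span_singleton]
      intro h
      have := congrFun (congrFun h 0) 1
      simp at this
  · refine FaceAux.main' ![id, id]
      ![fun i => if i = 0 then 1 else 0, fun i => if i = 0 then 0 else 1] ![(0,0), (1,1)] ?_ ?_ 2 ?_
    · intro a b
      fin_cases a <;> fin_cases b <;> simp [FaceAux.KK]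
    · intro i j
      simp only [Fin.sum_univ_two]
      by_cases hi : i = 0 <;> by_cases hj : j = 0 <;> simp_all [eq_comm]
    · let f : ℂ →ₗ[ℝ] Matrix (Fin 2) (Fin 2) ℂ :=
        { toFun := fun z => !![0, z; star z, 0]
          map_add' := by
            intro a b; ext i j; fin_cases i <;> fin_cases j <;> simp
          map_smul' := by
            intro a b; ext i j; fin_cases i <;> fin_cases j <;> simp }
      have hf : Function.Injective f := by
        intro a b h
        have := congrFun (congrFun h 0) 1
        simpa [f] using this
      have : FaceAux.S (FaceAux.KK ![id, id]
          ![fun i : Fin (m+3) => if i = 0 then 1 else 0, fun i => if i = 0 then 0 else 1]) =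
          LinearMap.range f := by
        ext H
        rw [FaceAux.mem_S, LinearMap.mem_range]
        constructor
        · rintro ⟨hh, hH⟩
          have a1 := hH 0 0
          have a2 := hH 1 1
          simp [Fin.sum_univ_two] at a1 a2
          refine ⟨H 0 1, ?_⟩
          have a4 := hh.apply 1 0
          ext a b
          fin_cases a <;> fin_cases b <;> simp_all [f]
        · rintro ⟨c, rfl⟩
          constructor
          · ext a b
            fin_cases a <;> fin_cases b <;> simp [f]
          · intro i j
            by_cases hi : i = 0 <;> by_cases hj : j = 0 <;> simp_all [f, eq_comm]
      rw [this, LinearMap.finrank_range_of_inj hf, Complex.finrank_real_complex]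
end
end

section
/- A matrix A ∈ C_n belongs to the relative interior of C_n (the interior of C_n with respect to its affine hull) if and only if A is positive definite. -/
open Matrix
open scoped ComplexOrder

noncomputable section

lemma aux_span (n : ℕ) {M : Matrix (Fin n × Fin n) (Fin n × Fin n) ℂ}
    (hM : M ∈ affineSpan ℝ (Cset n)) :
    M.IsHermitian ∧ ∀ i j : Fin n, ∑ k : Fin n, M (i, k) (j, k) = if i = j then 1 else 0 := by
  refine affineSpan_induction (p := fun M => M.IsHermitian ∧
    ∀ i j : Fin n, ∑ k : Fin n, M (i, k) (j, k) = if i = j then 1 else 0) hM ?_ ?_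
  · exact fun x hx => ⟨hx.1.isHermitian, hx.2⟩
  · intro c u v w hu hv hw
    obtain ⟨hu1, hu2⟩ := hu
    obtain ⟨hv1, hv2⟩ := hv
    obtain ⟨hw1, hw2⟩ := hw
    rw [vsub_eq_sub, vadd_eq_add]
    constructor
    · have := hu1.eq
      have := hv1.eq
      have := hw1.eq
      simp only [Matrix.IsHermitian, conjTranspose_add, conjTranspose_smul, conjTranspose_sub, *,
        star_trivial]
    · intro i j
      simp only [Matrix.add_apply, Matrix.smul_apply, Matrix.sub_apply, Finset.sum_add_distrib,
        ← Finset.smul_sum, Finset.sum_sub_distrib, hu2, hv2, hw2]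
      simp

lemma aux_open {m : Type*} [Fintype m] [DecidableEq m] {A : Matrix m m ℂ} (hA : A.PosDef) :
    ∀ᶠ M in nhds A, M.IsHermitian → M.PosSemidef := by
  have h : ∀ᶠ M in nhds A, ∀ x ∈ Metric.sphere (0 : m → ℂ) 1, 0 < (star x ⬝ᵥ (M *ᵥ x)).re := by
    apply (isCompact_sphere (0 : m → ℂ) 1).eventually_forall_of_forall_eventually
    intro y hy
    have hy0 : y ≠ 0 := by
      rintro rfl
      simp at hy
    have hc : Continuous fun z : Matrix m m ℂ × (m → ℂ) => (star z.2 ⬝ᵥ (z.1 *ᵥ z.2)).re := by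
      fun_prop
    exact hc.continuousAt.eventually_const_lt (Complex.pos_iff.1 (hA.dotProduct_mulVec_pos hy0)).1
  filter_upwards [h] with M hM hH
  refine PosSemidef.of_dotProduct_mulVec_nonneg hH fun x => ?_
  have him : (star x ⬝ᵥ (M *ᵥ x)).im = 0 := by
    have := hH.im_star_dotProduct_mulVec_self x
    simpa using this
  rw [Complex.nonneg_iff]
  refine ⟨?_, him.symm⟩
  by_cases hx : x = 0
  · simp [hx]
  have hn : ‖x‖ ≠ 0 := norm_ne_zero_iff.2 hx
  have h1 := hM ((‖x‖⁻¹ : ℝ) • x) (by simp [norm_smul, hn])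
  rw [Matrix.mulVec_smul, star_smul, smul_dotProduct, dotProduct_smul] at h1
  simp only [Complex.smul_re, star_trivial, smul_eq_mul] at h1
  have hp : 0 < ‖x‖⁻¹ := by positivity
  exact (pos_of_mul_pos_right (pos_of_mul_pos_right h1 hp.le) hp.le).le

/-- A matrix in `C_n` lies in the relative interior of `C_n` iff it is positive
definite. -/
theorem mem_intrinsicInterior_iff_posDef (n : ℕ)
    (A : Matrix (Fin n × Fin n) (Fin n × Fin n) ℂ) (hA : A ∈ Cset n) :
    A ∈ intrinsicInterior ℝ (Cset n) ↔ A.PosDef := by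
  rw [mem_intrinsicInterior]
  constructor
  · rintro ⟨y, hy, rfl⟩
    rcases Nat.eq_zero_or_pos n with rfl | hn
    · exact PosDef.of_dotProduct_mulVec_pos hA.1.isHermitian
        fun x hx => (hx (Subsingleton.elim _ _)).elim
    set D : Matrix (Fin n × Fin n) (Fin n × Fin n) ℂ := ((n : ℝ)⁻¹) • 1 with hD
    have hDp : D.PosDef := PosDef.one.smul (by positivity)
    have hDC : D ∈ Cset n := by
      refine ⟨hDp.posSemidef, fun i j => ?_⟩
      have : (n : ℂ) ≠ 0 := by exact_mod_cast hn.ne'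
      by_cases h : i = j <;> simp [hD, Matrix.one_apply, h, this]
    set Y : Matrix (Fin n × Fin n) (Fin n × Fin n) ℂ := y.1 with hY
    let f : ℝ → affineSpan ℝ (Cset n) := fun t =>
      ⟨AffineMap.lineMap Y D (-t),
        AffineMap.lineMap_mem _ y.2 (subset_affineSpan ℝ _ hDC)⟩
    have hf : Continuous f := by
      refine Continuous.subtype_mk ?_ _
      simp only [AffineMap.lineMap_apply, vsub_eq_sub, vadd_eq_add]
      fun_prop
    have hf0 : f 0 = y := by
      apply Subtype.ext
      simp [f, hY]
    have hev : ∀ᶠ t in nhds (0 : ℝ), f t ∈ ((↑) ⁻¹' Cset n : Set (affineSpan ℝ (Cset n))) := by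
      apply hf.continuousAt.eventually
      rw [hf0]
      exact mem_interior_iff_mem_nhds.1 hy
    obtain ⟨t, ht, ht0⟩ := ((hev.filter_mono nhdsWithin_le_nhds).and
      (self_mem_nhdsWithin (a := (0 : ℝ)) (s := Set.Ioi 0))).exists
    have ht0' : 0 < t := ht0
    have hB : (AffineMap.lineMap Y D (-t) : Matrix _ _ ℂ).PosSemidef := ht.1
    have hs := (hDp.smul ht0').posSemidef_add hB
    have hs2 := hs.smul (show 0 < (1 + t)⁻¹ by positivity)
    convert hs2 using 1
    rw [AffineMap.lineMap_apply, vsub_eq_sub, vadd_eq_add]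
    have : (-t) • (D - Y) + Y + t • D = (1 + t) • Y := by module
    rw [this, smul_smul, inv_mul_cancel₀ (by positivity), one_smul]
  · intro h
    refine ⟨⟨A, subset_affineSpan ℝ _ hA⟩, ?_, rfl⟩
    rw [mem_interior_iff_mem_nhds]
    have h1 := (continuous_subtype_val (p := fun M => M ∈ affineSpan ℝ (Cset n))).continuousAt
      (x := ⟨A, subset_affineSpan ℝ _ hA⟩) |>.eventually (aux_open h)
    filter_upwards [h1] with M hM
    have := aux_span n M.2
    exact ⟨hM this.1, this.2⟩
end
end

section
/- The affine hull of C_n (the smallest affine subspace of the real vector space of n²×n² complex Hermitian matrices containing C_n) equals W_n = { A = [A_{ij}]_{i,j=1}^n Hermitian of order n² with n×n blocks A_{ij} : tr(A_{ij}) = δ_{ij} for all i,j ∈ {1,…,n} }; in particular, the affine hull of C_n has real dimension n⁴ − n². -/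
open Matrix
open scoped ComplexOrder

noncomputable section

section
open scoped MatrixOrder Matrix.Norms.L2Operator
theorem exists_psd {ι : Type*} [Fintype ι] [DecidableEq ι] (H : Matrix ι ι ℂ) (hH : H.IsHermitian) :
   ∃ c : ℝ, 0 < c ∧ (H + c • (1 : Matrix ι ι ℂ)).PosSemidef := by
  have h := IsSelfAdjoint.neg_algebraMap_norm_le_self (a := H) hH
  rw [Matrix.le_iff] at h
  refine ⟨‖H‖ + 1, by positivity, ?_⟩
  have h2 : ((1:ℝ) • (1 : Matrix ι ι ℂ)).PosSemidef := by
    simpa using Matrix.PosSemidef.one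
  have h3 := h.add h2
  rw [Algebra.algebraMap_eq_smul_one, sub_neg_eq_add, add_assoc, ← add_smul] at h3
  exact h3
end

instance fin_sa (ι : Type*) [Fintype ι] : Module.Finite ℝ (selfAdjoint (Matrix ι ι ℂ)) :=
  inferInstanceAs (Module.Finite ℝ (selfAdjoint.submodule ℝ (Matrix ι ι ℂ)))

instance fin_ska (ι : Type*) [Fintype ι] : Module.Finite ℝ (skewAdjoint (Matrix ι ι ℂ)) :=
  inferInstanceAs (Module.Finite ℝ (skewAdjoint.submodule ℝ (Matrix ι ι ℂ)))

theorem finrank_sa (ι : Type*) [Fintype ι] [DecidableEq ι] :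
   Module.finrank ℝ (selfAdjoint (Matrix ι ι ℂ)) = Fintype.card ι ^ 2 := by
  have e := (StarModule.decomposeProdAdjoint ℝ (Matrix ι ι ℂ)).finrank_eq
  have e2 : Module.finrank ℝ (skewAdjoint (Matrix ι ι ℂ)) = Module.finrank ℝ (selfAdjoint (Matrix ι ι ℂ)) := by
    apply le_antisymm
    · refine LinearMap.finrank_le_finrank_of_injective (f := (skewAdjoint.negISMul : skewAdjoint (Matrix ι ι ℂ) →ₗ[ℝ] _)) ?_
      intro a b h
      have := congrArg (fun x : selfAdjoint (Matrix ι ι ℂ) => Complex.I • (x : Matrix ι ι ℂ)) h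
      simpa [smul_smul, skewAdjoint.negISMul] using this
    · let f : selfAdjoint (Matrix ι ι ℂ) →ₗ[ℝ] skewAdjoint (Matrix ι ι ℂ) :=
        { toFun := fun a => ⟨Complex.I • (a : Matrix ι ι ℂ), by
            rw [skewAdjoint.mem_iff]; simp [a.2.star_eq]⟩
          map_add' := by intro a b; ext1; simp
          map_smul' := by intro r a; ext1; exact smul_comm _ _ _ }
      refine LinearMap.finrank_le_finrank_of_injective (f := f) ?_
      intro a b h
      have := congrArg (fun x : skewAdjoint (Matrix ι ι ℂ) => (-Complex.I) • (x : Matrix ι ι ℂ)) h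
      simpa [smul_smul, f] using this
  rw [Module.finrank_prod, e2, Module.finrank_matrix, Complex.finrank_real_complex] at e
  nlinarith

abbrev MM (n : ℕ) := Matrix (Fin n × Fin n) (Fin n × Fin n) ℂ

def pT (n : ℕ) : selfAdjoint (MM n) →ₗ[ℝ] selfAdjoint (Matrix (Fin n) (Fin n) ℂ) where
  toFun A := ⟨Matrix.of fun i j => ∑ k, (A : MM n) (i,k) (j,k), by
    rw [selfAdjoint.mem_iff]
    ext i j
    have h : ∀ a b, star ((A : MM n) a b) = (A : MM n) b a := fun a b =>
      congrFun (congrFun A.2.star_eq b) a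
    simp only [Matrix.star_apply, Matrix.of_apply, star_sum, h]⟩
  map_add' A B := by ext1; ext i j; simp [Finset.sum_add_distrib]
  map_smul' r A := by ext1; ext i j; simp [Finset.mul_sum]

theorem pT_surj (n : ℕ) (hn : 0 < n) : Function.Surjective (pT n) := by
  intro B
  have hB : ∀ a b, star ((B : Matrix (Fin n) (Fin n) ℂ) a b) = (B : Matrix (Fin n) (Fin n) ℂ) b a := fun a b =>
      congrFun (congrFun B.2.star_eq b) a
  refine ⟨⟨Matrix.of fun p q => if p.2 = q.2 then (n:ℂ)⁻¹ * (B : Matrix (Fin n) (Fin n) ℂ) p.1 q.1 else 0, ?_⟩, ?_⟩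
  · rw [selfAdjoint.mem_iff]
    ext p q
    simp only [Matrix.star_apply, Matrix.of_apply]
    split_ifs with h1 h2 h2
    · rw [star_mul', hB]; simp
    · exact absurd h1.symm h2
    · exact absurd h2.symm h1
    · simp
  · ext1; ext i j
    have : (n:ℂ) ≠ 0 := by exact_mod_cast hn.ne'
    simp [pT, this]

def saVal (n : ℕ) : selfAdjoint (MM n) →ₗ[ℝ] MM n where
  toFun A := A
  map_add' _ _ := rfl
  map_smul' _ _ := rfl

def V0 (n : ℕ) : Submodule ℝ (MM n) :=
  (LinearMap.ker (pT n)).map (saVal n)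

theorem mem_V0 (n : ℕ) (A : MM n) : A ∈ V0 n ↔ A.IsHermitian ∧
    ∀ i j : Fin n, ∑ k : Fin n, A (i, k) (j, k) = 0 := by
  constructor
  · rintro ⟨B, hB, rfl⟩
    refine ⟨B.2, fun i j => ?_⟩
    have h : pT n B = 0 := hB
    exact congrFun (congrFun (congrArg Subtype.val h) i) j
  · rintro ⟨h1, h2⟩
    refine ⟨⟨A, h1⟩, ?_, rfl⟩
    change pT n ⟨A, h1⟩ = 0
    ext1; ext i j
    exact h2 i j

theorem finrank_V0 (n : ℕ) (hn : 0 < n) : Module.finrank ℝ (V0 n) = n ^ 4 - n ^ 2 := by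
  have h1 : Module.finrank ℝ (V0 n) = Module.finrank ℝ (LinearMap.ker (pT n)) :=
    (Submodule.equivMapOfInjective (saVal n) Subtype.val_injective _).finrank_eq.symm
  have h2 := LinearMap.finrank_range_add_finrank_ker (pT n)
  rw [LinearMap.range_eq_top.2 (pT_surj n hn), finrank_top, finrank_sa, finrank_sa] at h2
  simp only [Fintype.card_prod, Fintype.card_fin] at h2
  rw [h1]
  have : (n*n)^2 = n^4 := by ring
  omega

theorem D_tr (n : ℕ) (hn : 0 < n) (i j : Fin n) :
    ∑ k : Fin n, ((n:ℝ)⁻¹ • (1 : MM n)) (i, k) (j, k) = if i = j then 1 else 0 := by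
  have : (n:ℂ) ≠ 0 := by exact_mod_cast hn.ne'
  by_cases h : i = j <;> simp [Matrix.one_apply, h, this]

theorem D_mem (n : ℕ) (hn : 0 < n) : ((n:ℝ)⁻¹ • (1 : MM n)) ∈ Cset n :=
  ⟨Matrix.PosSemidef.one.smul (by positivity), D_tr n hn⟩

theorem vs_eq (n : ℕ) (hn : 0 < n) : vectorSpan ℝ (Cset n) = V0 n := by
  apply le_antisymm
  · rw [vectorSpan_def, Submodule.span_le]
    rintro _ ⟨A, hA, B, hB, rfl⟩
    rw [SetLike.mem_coe, mem_V0]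
    refine ⟨hA.1.1.sub hB.1.1, fun i j => ?_⟩
    simp [Finset.sum_sub_distrib, hA.2, hB.2]
  · intro H hH
    rw [mem_V0] at hH
    obtain ⟨c, hc, hp⟩ := exists_psd H hH.1
    have hn' : (0:ℝ) < n := by exact_mod_cast hn
    have hm : ((n:ℝ)⁻¹ * c⁻¹) • H + (n:ℝ)⁻¹ • (1 : MM n) ∈ Cset n := by
      constructor
      · have := hp.smul (a := (n:ℝ)⁻¹ * c⁻¹) (by positivity)
        rw [smul_add, smul_smul] at this
        convert this using 3
        field_simp
      · intro i j
        rw [← D_tr n hn i j]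
        simp only [Matrix.add_apply, Finset.sum_add_distrib]
        rw [add_eq_right]
        simp only [Matrix.smul_apply]
        rw [← Finset.smul_sum, hH.2, smul_zero]
    have h := vsub_mem_vectorSpan ℝ hm (D_mem n hn)
    have h2 := Submodule.smul_mem _ ((n:ℝ) * c) h
    convert h2 using 1
    rw [vsub_eq_sub, add_sub_cancel_right, smul_smul]
    have : (n:ℝ) * c * ((n:ℝ)⁻¹ * c⁻¹) = 1 := by field_simp
    rw [this, one_smul]

/-- The affine hull of `C_n` is the affine subspace `W_n` of Hermitian matrices whose
blocks satisfy the trace conditions, and it has real dimension `n⁴ - n²`. -/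
theorem affineSpan_Cset (n : ℕ) (hn : 0 < n) :
    (affineSpan ℝ (Cset n) : Set (Matrix (Fin n × Fin n) (Fin n × Fin n) ℂ)) =
      {A | A.IsHermitian ∧
        ∀ i j : Fin n, ∑ k : Fin n, A (i, k) (j, k) = if i = j then 1 else 0} ∧
    Module.finrank ℝ ↥(vectorSpan ℝ (Cset n)) = n ^ 4 - n ^ 2 := by
  refine ⟨?_, by rw [vs_eq n hn, finrank_V0 n hn]⟩
  have hD := D_mem n hn
  ext A
  rw [SetLike.mem_coe, ← AffineSubspace.vsub_right_mem_direction_iff_mem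
    (mem_affineSpan ℝ hD), direction_affineSpan, vs_eq n hn, mem_V0, vsub_eq_sub]
  constructor
  · rintro ⟨h1, h2⟩
    refine ⟨by simpa using h1.add hD.1.1, fun i j => ?_⟩
    have := h2 i j
    simp only [Matrix.sub_apply, Finset.sum_sub_distrib] at this
    rw [hD.2] at this
    exact sub_eq_zero.1 this
  · rintro ⟨h1, h2⟩
    refine ⟨h1.sub hD.1.1, fun i j => ?_⟩
    simp only [Matrix.sub_apply, Finset.sum_sub_distrib]
    rw [hD.2, h2, sub_self]
end
end

section
/- Let n be a positive integer and let x ∈ ℂ^{n²} be nonzero. Then there exists a vector u = (u_1ᵗ, u_2ᵗ, …, u_nᵗ)ᵗ ∈ ℂ^{n²}, with u_i ∈ ℂⁿ for each i, such that the vectors u_1, …, u_n form an orthonormal basis of ℂⁿ with respect to the standard inner product and the standard inner product ⟨u, x⟩ in ℂ^{n²} is nonzero. -/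
open Matrix
open scoped ComplexOrder

noncomputable section

/-- For every nonzero `x ∈ ℂ^{n²}` there is a vector `u` whose `n` blocks form an
orthonormal basis of `ℂⁿ` and with `⟨u, x⟩ ≠ 0`. -/
theorem exists_orthonormal_blocks_inner_ne_zero (n : ℕ) (hn : 0 < n)
    (x : Fin n × Fin n → ℂ) (hx : x ≠ 0) :
    ∃ u : Fin n × Fin n → ℂ,
      (∀ i j : Fin n,
          ∑ k : Fin n, star (u (i, k)) * u (j, k) = if i = j then 1 else 0) ∧
      Submodule.span ℂ (Set.range fun i : Fin n => fun k : Fin n => u (i, k)) = ⊤ ∧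
      ∑ p : Fin n × Fin n, star (u p) * x p ≠ 0 := by
  obtain ⟨⟨a, b⟩, hab⟩ := Function.ne_iff.mp hx
  let σ : Equiv.Perm (Fin n) := Equiv.swap a b
  have hσ : σ a = b := Equiv.swap_apply_left a b
  have key : ∀ s : Fin n → ℂ, (∀ i, star (s i) * s i = 1) →
      ∑ i, star (s i) * x (i, σ i) ≠ 0 → ∃ u : Fin n × Fin n → ℂ,
      (∀ i j : Fin n,
          ∑ k : Fin n, star (u (i, k)) * u (j, k) = if i = j then 1 else 0) ∧
      Submodule.span ℂ (Set.range fun i : Fin n => fun k : Fin n => u (i, k)) = ⊤ ∧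
      ∑ p : Fin n × Fin n, star (u p) * x p ≠ 0 := by
    intro s hs h
    refine ⟨fun p => if p.2 = σ p.1 then s p.1 else 0, ?_, ?_, ?_⟩
    · intro i j
      rw [Finset.sum_eq_single (σ i)]
      · by_cases hij : i = j
        · subst hij
          simpa using hs i
        · simp [hij]
      · intro k _ hk
        simp [hk]
      · simp
    · rw [eq_top_iff, ← (Pi.basisFun ℂ (Fin n)).span_eq, Submodule.span_le]
      rintro _ ⟨k, rfl⟩
      have hmem : (fun l : Fin n => if l = σ (σ.symm k) then s (σ.symm k) else 0) ∈
          Submodule.span ℂ (Set.range fun i : Fin n => fun k : Fin n =>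
            if k = σ i then s i else 0) := Submodule.subset_span ⟨σ.symm k, rfl⟩
      have h2 := Submodule.smul_mem _ (star (s (σ.symm k))) hmem
      refine Eq.mpr (congrArg (fun v => v ∈ Submodule.span ℂ (Set.range fun i : Fin n =>
        fun k : Fin n => if k = σ i then s i else 0)) ?_) h2
      funext l
      have := hs (σ.symm k)
      by_cases hl : l = k
      · subst hl
        simp only [Pi.basisFun_apply, Pi.single_eq_same, Pi.smul_apply, smul_eq_mul,
          Equiv.apply_symm_apply, if_true]
        exact this.symm
      · simp [hl]
    · rw [Fintype.sum_prod_type]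
      convert h using 2 with i
      rw [Finset.sum_eq_single (σ i)]
      · simp
      · intro k _ hk
        simp [hk]
      · simp
  by_cases h1 : ∑ i, star ((fun _ => 1 : Fin n → ℂ) i) * x (i, σ i) = 0
  · refine key (fun i => if i = a then -1 else 1) ?_ ?_
    · intro i
      by_cases hi : i = a <;> simp [hi]
    · intro h2
      have h3 := congrArg₂ (· - ·) h1 h2
      simp only [← Finset.sum_sub_distrib] at h3
      rw [Finset.sum_eq_single a] at h3
      · apply hab
        simp [hσ] at h3
        simpa using h3
      · intro i _ hi
        simp [hi]
      · simp
  · exact key _ (by simp) h1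
end
end

section
/- Let n ≥ 2 be an integer and let A ∈ C_n with rank A = n² − 1. Then the face F(A) of C_n generated by A has dimension exactly n⁴ − 3n² + 1. -/
open Matrix
open scoped ComplexOrder

noncomputable section

abbrev SA (ι : Type*) [Fintype ι] [DecidableEq ι] : Submodule ℝ (Matrix ι ι ℂ) :=
  selfAdjoint.submodule ℝ (Matrix ι ι ℂ)

lemma mem_SA {ι : Type*} [Fintype ι] [DecidableEq ι] (H : Matrix ι ι ℂ) :
    H ∈ SA ι ↔ H.IsHermitian := Iff.rfl

lemma finrank_SA (ι : Type*) [Fintype ι] [DecidableEq ι] :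
    Module.finrank ℝ (SA ι) = Fintype.card ι ^ 2 := by
  let f : (SA ι × SA ι) →ₗ[ℝ] Matrix ι ι ℂ :=
    { toFun := fun p => p.1.1 + Complex.I • p.2.1
      map_add' := by intro a b; simp only [Prod.fst_add, Prod.snd_add, Submodule.coe_add, smul_add]; abel
      map_smul' := by
        intro c a
        simp only [Prod.smul_fst, Prod.smul_snd, Submodule.coe_smul, smul_add, RingHom.id_apply]
        rw [smul_comm] }
  have hf : Function.Bijective f := by
    constructor
    · rw [← LinearMap.ker_eq_bot, LinearMap.ker_eq_bot']
      rintro ⟨⟨a, ha⟩, ⟨b, hb⟩⟩ h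
      have h1 : a + Complex.I • b = 0 := h
      have h2 : a - Complex.I • b = 0 := by
        have := congrArg Matrix.conjTranspose h1
        rw [mem_SA] at ha hb
        simpa [ha.eq, hb.eq, ← sub_eq_add_neg] using this
      have h3 : a = 0 := by
        have : (2:ℂ) • a = 0 := by
          rw [two_smul]
          calc a + a = (a + Complex.I • b) + (a - Complex.I • b) := by abel
            _ = 0 := by rw [h1, h2, add_zero]
        simpa using this
      have h4 : b = 0 := by
        rw [h3] at h1
        simpa using h1
      subst h3 h4
      rfl
    · intro m
      refine ⟨⟨realPart m, imaginaryPart m⟩, ?_⟩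
      exact realPart_add_I_smul_imaginaryPart m
  have := (LinearEquiv.ofBijective f hf).finrank_eq
  rw [Module.finrank_prod, finrank_real_of_complex, Module.finrank_matrix] at this
  simp at this
  have e : Module.finrank ℝ (SA ι) + Module.finrank ℝ (SA ι) = 2 * (Fintype.card ι * Fintype.card ι) := this
  rw [pow_two]
  omega

lemma finrank_inf_ker {V W : Type*} [AddCommGroup V] [Module ℝ V] [FiniteDimensional ℝ V]
    [AddCommGroup W] [Module ℝ W] (p : Submodule ℝ V) (f : V →ₗ[ℝ] W) :
    Module.finrank ℝ (p.map f) + Module.finrank ℝ ↥(p ⊓ LinearMap.ker f) = Module.finrank ℝ p := by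
  have h := LinearMap.finrank_range_add_finrank_ker (f.domRestrict p)
  rw [LinearMap.range_domRestrict] at h
  rw [← h]
  congr 1
  rw [LinearMap.ker_domRestrict, ← Submodule.finrank_map_subtype_eq p]
  have e : p ⊓ LinearMap.ker f = Submodule.map p.subtype (Submodule.comap p.subtype (LinearMap.ker f)) := by
    ext x; simp
  rw [e]

def mv {ι : Type*} [Fintype ι] (v : ι → ℂ) : Matrix ι ι ℂ →ₗ[ℝ] (ι → ℂ) where
  toFun H := H *ᵥ v
  map_add' a b := Matrix.add_mulVec a b v
  map_smul' c a := by simp [Matrix.smul_mulVec]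

def pt (n : ℕ) : Matrix (Fin n × Fin n) (Fin n × Fin n) ℂ →ₗ[ℝ] Matrix (Fin n) (Fin n) ℂ where
  toFun H := Matrix.of fun i j => ∑ k, H (i,k) (j,k)
  map_add' a b := by ext i j; simp [Finset.sum_add_distrib]
  map_smul' c a := by ext i j; simp [Finset.mul_sum]

def imf {ι : Type*} [Fintype ι] (v : ι → ℂ) : (ι → ℂ) →ₗ[ℝ] ℝ where
  toFun u := (star v ⬝ᵥ u).im
  map_add' a b := by simp [dotProduct_add]
  map_smul' c a := by simp [dotProduct_smul]

lemma star_dot_self_ne {ι : Type*} [Fintype ι] (v : ι → ℂ) (hv : v ≠ 0) :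
    star v ⬝ᵥ v ≠ 0 := by
  simpa using hv

lemma map_mv {ι : Type*} [Fintype ι] [DecidableEq ι] (v : ι → ℂ) (hv : v ≠ 0) :
    (SA ι).map (mv v) = LinearMap.ker (imf v) := by
  have hs := star_dot_self_ne v hv
  have hsr : star (star v ⬝ᵥ v) = star v ⬝ᵥ v := by
    rw [← Matrix.star_dotProduct_star, star_star, dotProduct_comm]
  ext u
  rw [Submodule.mem_map, LinearMap.mem_ker]
  constructor
  · rintro ⟨H, hH, rfl⟩
    rw [mem_SA] at hH
    change (star v ⬝ᵥ (H *ᵥ v)).im = 0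
    rw [← Complex.conj_eq_iff_im]
    change star _ = _
    rw [← Matrix.star_dotProduct_star, star_star, star_mulVec, hH.eq, dotProduct_mulVec, dotProduct_comm]
  · intro hu
    change (star v ⬝ᵥ u).im = 0 at hu
    rw [← Complex.conj_eq_iff_im] at hu
    change star _ = _ at hu
    have hu2 : star u ⬝ᵥ v = star v ⬝ᵥ u := by
      rw [← hu, ← Matrix.star_dotProduct_star, star_star, dotProduct_comm]
    set s := star v ⬝ᵥ v with hsdef
    set c := star v ⬝ᵥ u with hcdef
    refine ⟨s⁻¹ • (vecMulVec u (star v) + vecMulVec v (star u)) - (c / s^2) • vecMulVec v (star v), ?_, ?_⟩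
    · rw [mem_SA]
      unfold Matrix.IsHermitian
      have hs' : (starRingEnd ℂ) s = s := hsr
      have hc' : (starRingEnd ℂ) c = c := hu
      simp [conjTranspose_vecMulVec, hs', hc', add_comm]
    · change (_ - _) *ᵥ v = u
      ext i
      simp only [sub_mulVec, add_mulVec, smul_mulVec, vecMulVec_mulVec, hu2, ← hsdef]
      simp
      field_simp
      ring

lemma finrank_ker_imf {ι : Type*} [Fintype ι] (v : ι → ℂ) (hv : v ≠ 0) :
    Module.finrank ℝ (LinearMap.ker (imf v)) + 1 = 2 * Fintype.card ι := by
  have h := LinearMap.finrank_range_add_finrank_ker (imf v)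
  have hr : LinearMap.range (imf v) = ⊤ := by
    rw [LinearMap.range_eq_top]
    apply LinearMap.surjective
    intro h0
    apply star_dot_self_ne v hv
    have h1 : (star v ⬝ᵥ v).im = 0 := congrArg (fun f => f v) h0
    have h2 : (star v ⬝ᵥ (Complex.I • v)).im = 0 := congrArg (fun f => f (Complex.I • v)) h0
    rw [dotProduct_smul] at h2
    simp at h2
    exact Complex.ext h2 h1
  rw [hr, finrank_top, finrank_real_of_complex] at h
  simp at h
  omega

lemma exists_orth {n : ℕ} (hn : 2 ≤ n) (a : Fin n → ℂ) :
    ∃ y : Fin n → ℂ, y ≠ 0 ∧ ∑ k, star (y k) * a k = 0 := by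
  let f : (Fin n → ℂ) →ₗ[ℂ] ℂ :=
    { toFun := fun y => y ⬝ᵥ a
      map_add' := fun x y => add_dotProduct x y a
      map_smul' := fun c x => smul_dotProduct c x a }
  have := LinearMap.ker_ne_bot_of_finrank_lt (f := f) (by simp; omega)
  obtain ⟨y, hy, hy0⟩ := Submodule.exists_mem_ne_zero_of_ne_bot this
  refine ⟨star y, by simpa using hy0, ?_⟩
  have : y ⬝ᵥ a = 0 := hy
  simpa [dotProduct] using this

lemma pt_surj {n : ℕ} (hn : 2 ≤ n) (v : Fin n × Fin n → ℂ) (X : Matrix (Fin n) (Fin n) ℂ)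
    (hX : X.IsHermitian) :
    ∃ H : Matrix (Fin n × Fin n) (Fin n × Fin n) ℂ, H.IsHermitian ∧ H *ᵥ v = 0 ∧ pt n H = X := by
  obtain ⟨U, d, hUd⟩ : ∃ (U : Matrix (Fin n) (Fin n) ℂ) (d : Fin n → ℝ),
      ∀ i j, X i j = ∑ l, (d l : ℂ) * U i l * star (U j l) := by
    refine ⟨hX.eigenvectorUnitary, hX.eigenvalues, fun i j => ?_⟩
    have := congrFun (congrFun hX.spectral_theorem i) j
    rw [this, Unitary.conjStarAlgAut_apply, Matrix.mul_apply]
    simp [Matrix.star_apply, mul_comm]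
  choose y hy0 hy using fun l => exists_orth hn (fun k => ∑ i, star (U i l) * v (i,k))
  have hs : ∀ l, ∑ k, y l k * star (y l k) ≠ 0 := by
    intro l h
    apply hy0 l
    have : y l ⬝ᵥ star (y l) = 0 := h
    simpa using this
  set s := fun l => ∑ k, y l k * star (y l k) with hsdef
  have hsr : ∀ l, star (s l) = s l := by
    intro l
    simp [hsdef, mul_comm]
  refine ⟨Matrix.of fun p q => ∑ l, (d l / s l : ℂ) * (U p.1 l * y l p.2) * star (U q.1 l * y l q.2),
    ?_, ?_, ?_⟩
  · ext p q
    have hsr' : ∀ l, (starRingEnd ℂ) (s l) = s l := hsr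
    simp only [conjTranspose_apply, of_apply, star_sum]
    refine Finset.sum_congr rfl fun l _ => ?_
    simp [hsr']
    ring
  · ext p
    simp only [mulVec, dotProduct, of_apply, Pi.zero_apply, Finset.sum_mul]
    rw [Finset.sum_comm]
    refine Finset.sum_eq_zero fun l _ => ?_
    have := hy l
    simp only [Finset.mul_sum] at this
    rw [Finset.sum_comm, ← Fintype.sum_prod_type'] at this
    calc _ = ((d l / s l : ℂ) * (U p.1 l * y l p.2)) * ∑ x : Fin n × Fin n, star (y l x.2) * (star (U x.1 l) * v (x.1, x.2)) := by
          rw [Finset.mul_sum]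
          refine Finset.sum_congr rfl fun q _ => ?_
          simp only [star_mul']
          ring
      _ = 0 := by rw [this, mul_zero]
  · ext i j
    change ∑ k : Fin n, _ = _
    rw [hUd]
    simp only [of_apply]
    rw [Finset.sum_comm]
    refine Finset.sum_congr rfl fun l _ => ?_
    calc _ = (d l / s l : ℂ) * U i l * star (U j l) * ∑ k, y l k * star (y l k) := by
          rw [Finset.mul_sum]
          refine Finset.sum_congr rfl fun q _ => ?_
          simp only [star_mul']
          ring
      _ = (d l / s l : ℂ) * U i l * star (U j l) * s l := rfl
      _ = _ := by
        have := hs l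
        change s l ≠ 0 at this
        field_simp

def dirSp {n : ℕ} (v : Fin n × Fin n → ℂ) :
    Submodule ℝ (Matrix (Fin n × Fin n) (Fin n × Fin n) ℂ) :=
  (SA _ ⊓ LinearMap.ker (mv v)) ⊓ LinearMap.ker (pt n)

lemma finrank_dirSp {n : ℕ} (hn : 2 ≤ n) (v : Fin n × Fin n → ℂ) (hv : v ≠ 0) :
    Module.finrank ℝ (dirSp v) = n ^ 4 - 3 * n ^ 2 + 1 := by
  have h1 := finrank_inf_ker (SA (Fin n × Fin n)) (mv v)
  have h2 := finrank_inf_ker (SA (Fin n × Fin n) ⊓ LinearMap.ker (mv v)) (pt n)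
  have h3 : (SA (Fin n × Fin n) ⊓ LinearMap.ker (mv v)).map (pt n) = SA (Fin n) := by
    ext X
    rw [Submodule.mem_map, mem_SA]
    constructor
    · rintro ⟨H, ⟨hH, -⟩, rfl⟩
      have hH' : H.IsHermitian := hH
      ext i j
      change star (∑ k : Fin n, _) = ∑ k : Fin n, _
      rw [star_sum]
      exact Finset.sum_congr rfl fun k _ => hH'.apply _ _
    · intro hX
      obtain ⟨H, a, b, c⟩ := pt_surj hn v X hX
      exact ⟨H, ⟨a, b⟩, c⟩
  have h4 := finrank_ker_imf v hv
  rw [map_mv v hv, finrank_SA] at h1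
  rw [h3, finrank_SA] at h2
  simp only [Fintype.card_prod, Fintype.card_fin] at h1 h2 h4
  change _ + Module.finrank ℝ (dirSp v) = _ at h2
  have e : (n * n) ^ 2 = n ^ 4 := by ring
  have e2 : n * n = n ^ 2 := by ring
  have e3 : 4 * n ^ 2 ≤ n ^ 4 := by
    have : 4 ≤ n ^ 2 := by nlinarith
    calc 4 * n ^ 2 ≤ n ^ 2 * n ^ 2 := Nat.mul_le_mul_right _ this
      _ = n ^ 4 := by ring
  rw [e] at h1
  rw [e2] at h4
  omega

lemma psd_comb {ι : Type*} [Fintype ι] [DecidableEq ι] (H : Matrix ι ι ℂ)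
    (hH : H.IsHermitian) (a b : ℝ) (h : ∀ i, 0 ≤ a + b * hH.eigenvalues i) :
    (a • (1 : Matrix ι ι ℂ) + b • H).PosSemidef := by
  set U : Matrix ι ι ℂ := hH.eigenvectorUnitary.1 with hU
  have hUU : U * Uᴴ = 1 := Unitary.mul_star_self_of_mem hH.eigenvectorUnitary.2
  have hs : H = U * diagonal (fun i => (hH.eigenvalues i : ℂ)) * Uᴴ := by
    have := hH.spectral_theorem
    rw [Unitary.conjStarAlgAut_apply] at this
    exact this
  have e : a • (1 : Matrix ι ι ℂ) + b • H =
      U * diagonal (fun i => ((a + b * hH.eigenvalues i : ℝ) : ℂ)) * Uᴴ := by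
    have e1 : diagonal (fun i => ((a + b * hH.eigenvalues i : ℝ) : ℂ)) =
      a • (1 : Matrix ι ι ℂ) + b • diagonal (fun i => (hH.eigenvalues i : ℂ)) := by
      ext i j
      by_cases hij : i = j
      · subst hij; simp
      · simp [hij]
    rw [e1, mul_add, add_mul, mul_smul_comm, mul_smul_comm, mul_one, smul_mul_assoc,
      smul_mul_assoc, hUU, ← hs]
  rw [e]
  apply PosSemidef.mul_mul_conjTranspose_same
  rw [posSemidef_diagonal_iff]
  intro i
  exact_mod_cast h i

lemma posDef_pert {ι : Type*} [Fintype ι] [DecidableEq ι] (P H : Matrix ι ι ℂ) (hP : P.PosDef)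
    (hH : H.IsHermitian) : ∃ ε : ℝ, 0 < ε ∧ (P + ε • H).PosSemidef ∧ (P - ε • H).PosSemidef := by
  obtain ⟨c, hc, hcl⟩ : ∃ c : ℝ, 0 < c ∧ ∀ i, c ≤ hP.1.eigenvalues i := by
    rcases isEmpty_or_nonempty ι with h | h
    · exact ⟨1, one_pos, fun i => h.elim i⟩
    · obtain ⟨i, hi⟩ := Finite.exists_min hP.1.eigenvalues
      exact ⟨_, hP.eigenvalues_pos i, hi⟩
  set M : ℝ := 1 + ∑ i, |hH.eigenvalues i| with hM
  have hM0 : 0 < M := by positivity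
  have hMl : ∀ i, |hH.eigenvalues i| ≤ M := by
    intro i
    have := Finset.single_le_sum (f := fun i => |hH.eigenvalues i|) (fun i _ => abs_nonneg _)
      (Finset.mem_univ i)
    linarith
  have h1 := psd_comb P hP.1 (-c) 1 (fun i => by linarith [hcl i])
  have h2 := psd_comb H hH c (c / M) (fun i => by
    have := (abs_le.1 (hMl i)).1
    have h3 : c + c / M * hH.eigenvalues i = c / M * (M + hH.eigenvalues i) := by field_simp
    rw [h3]
    exact mul_nonneg (by positivity) (by linarith))
  have h3 := psd_comb H hH c (-(c / M)) (fun i => by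
    have := (abs_le.1 (hMl i)).2
    have h3 : c + -(c / M) * hH.eigenvalues i = c / M * (M - hH.eigenvalues i) := by field_simp; ring
    rw [h3]
    exact mul_nonneg (by positivity) (by linarith))
  refine ⟨c / M, by positivity, ?_, ?_⟩
  · convert h1.add h2 using 1
    rw [neg_smul, one_smul]; abel
  · convert h1.add h3 using 1
    rw [neg_smul, one_smul, neg_smul]; abel

lemma psd_restrict {ι : Type*} [Fintype ι] [DecidableEq ι] (B : Matrix ι ι ℂ) (v : ι → ℂ)
    (hv : v ≠ 0) (hB : B.IsHermitian) (hBv : B *ᵥ v = 0)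
    (h : (B + vecMulVec v (star v)).PosSemidef) : B.PosSemidef := by
  refine .of_dotProduct_mulVec_nonneg hB fun x => ?_
  have hs := star_dot_self_ne v hv
  set c := (star v ⬝ᵥ x) / (star v ⬝ᵥ v) with hc
  have hw : star v ⬝ᵥ (x - c • v) = 0 := by
    rw [dotProduct_sub, dotProduct_smul, smul_eq_mul, hc]
    field_simp
    simp
  have h0 := h.dotProduct_mulVec_nonneg (x - c • v)
  rw [add_mulVec, vecMulVec_mulVec, hw] at h0
  have hvB : star v ᵥ* B = 0 := by
    have := congrArg star hBv
    rwa [star_mulVec, hB.eq, star_zero] at this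
  have e : B *ᵥ (x - c • v) = B *ᵥ x := by
    rw [mulVec_sub, mulVec_smul, hBv, smul_zero, sub_zero]
  have e2 : star (x - c • v) ⬝ᵥ (B *ᵥ x) = star x ⬝ᵥ (B *ᵥ x) := by
    rw [star_sub, star_smul, sub_dotProduct, smul_dotProduct, dotProduct_mulVec (star v), hvB]
    simp
  rw [e] at h0
  rw [dotProduct_add, e2] at h0
  simpa using h0

lemma psd_pert {ι : Type*} [Fintype ι] [DecidableEq ι] (A H : Matrix ι ι ℂ) (v : ι → ℂ)
    (hA : A.PosSemidef) (hker : ∀ x, A *ᵥ x = 0 → ∃ c : ℂ, x = c • v) (hv : v ≠ 0)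
    (hAv : A *ᵥ v = 0)
    (hH : H.IsHermitian) (hHv : H *ᵥ v = 0) :
    ∃ ε : ℝ, 0 < ε ∧ (A + ε • H).PosSemidef ∧ (A - ε • H).PosSemidef := by
  have hvv := posSemidef_vecMulVec_self_star v
  have hP : (A + vecMulVec v (star v)).PosDef := by
    refine .of_dotProduct_mulVec_pos (hA.1.add hvv.1) fun x hx => ?_
    have hn := (hA.add hvv).dotProduct_mulVec_nonneg x
    refine lt_of_le_of_ne hn fun h0 => hx ?_
    rw [add_mulVec, dotProduct_add] at h0
    have ha := hA.dotProduct_mulVec_nonneg x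
    have hb := hvv.dotProduct_mulVec_nonneg x
    obtain ⟨ha0, hb0⟩ := (add_eq_zero_iff_of_nonneg ha hb).1 h0.symm
    rw [hA.dotProduct_mulVec_zero_iff] at ha0
    rw [hvv.dotProduct_mulVec_zero_iff] at hb0
    obtain ⟨c, rfl⟩ := hker x ha0
    rw [mulVec_smul, vecMulVec_mulVec] at hb0
    have hs := star_dot_self_ne v hv
    rcases smul_eq_zero.1 hb0 with h | h
    · simp [h]
    · exfalso
      rcases smul_eq_zero.1 h with h | h
      · exact hs (by simpa using h)
      · exact hv h
  obtain ⟨ε, hε, h1, h2⟩ := posDef_pert _ H hP hH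
  have hεH : (ε • H).IsHermitian := by
    unfold Matrix.IsHermitian
    rw [conjTranspose_smul, hH.eq]; simp
  refine ⟨ε, hε, psd_restrict _ v hv (hA.1.add hεH) ?_ ?_, psd_restrict _ v hv (hA.1.sub hεH) ?_ ?_⟩
  · rw [add_mulVec, smul_mulVec, hAv, hHv]; simp
  · convert h1 using 1; abel
  · rw [sub_mulVec, smul_mulVec, hAv, hHv]; simp
  · convert h2 using 1; abel

lemma exists_ker {ι : Type*} [Fintype ι] [DecidableEq ι] (A : Matrix ι ι ℂ)
    (h : A.rank + 1 = Fintype.card ι) :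
    ∃ v : ι → ℂ, v ≠ 0 ∧ A *ᵥ v = 0 ∧ ∀ x, A *ᵥ x = 0 → ∃ c : ℂ, x = c • v := by
  have h1 := LinearMap.finrank_range_add_finrank_ker A.mulVecLin
  rw [Module.finrank_fintype_fun_eq_card] at h1
  change A.rank + _ = _ at h1
  have h2 : Module.finrank ℂ (LinearMap.ker A.mulVecLin) = 1 := by omega
  obtain ⟨v, hv, hc⟩ := finrank_eq_one_iff'.1 h2
  refine ⟨v, by simpa using hv, v.2, fun x hx => ?_⟩
  obtain ⟨c, hc⟩ := hc ⟨x, hx⟩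
  exact ⟨c, (congrArg Subtype.val hc).symm⟩

lemma smul_psd {ι : Type*} [Fintype ι] (A : Matrix ι ι ℂ) (hA : A.PosSemidef) (t : ℝ)
    (ht : 0 ≤ t) : (t • A).PosSemidef := hA.smul ht

lemma mem_Cset_iff (n : ℕ) (B : Matrix (Fin n × Fin n) (Fin n × Fin n) ℂ) :
    B ∈ Cset n ↔ B.PosSemidef ∧ pt n B = 1 := by
  unfold Cset
  rw [Set.mem_ofPred_eq]
  refine and_congr_right fun _ => ?_
  rw [← Matrix.ext_iff]
  rfl

lemma convex_Cset (n : ℕ) : Convex ℝ (Cset n) := by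
  intro x hx y hy a b ha hb hab
  rw [mem_Cset_iff] at *
  refine ⟨(smul_psd x hx.1 a ha).add (smul_psd y hy.1 b hb), ?_⟩
  rw [map_add, map_smul, map_smul, hx.2, hy.2, ← add_smul, hab, one_smul]

lemma isFace_ker (n : ℕ) (v : Fin n × Fin n → ℂ) :
    IsFace (Cset n) {B | B ∈ Cset n ∧ mv v B = 0} := by
  refine ⟨fun B hB => hB.1, ?_, ?_⟩
  · intro x hx y hy a b ha hb hab
    refine ⟨convex_Cset n hx.1 hy.1 ha hb hab, ?_⟩
    rw [map_add, map_smul, map_smul, hx.2, hy.2]; simp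
  · intro x hx y hy t ht0 ht1 hxy
    have hpx := smul_psd x ((mem_Cset_iff n x).1 hx).1 t ht0.le
    have hpy := smul_psd y ((mem_Cset_iff n y).1 hy).1 (1 - t) (by linarith)
    have h : (t • x + (1 - t) • y) *ᵥ v = 0 := hxy.2
    have h0 : star v ⬝ᵥ ((t • x) *ᵥ v) + star v ⬝ᵥ (((1 - t) • y) *ᵥ v) = 0 := by
      rw [← dotProduct_add, ← add_mulVec, h, dotProduct_zero]
    obtain ⟨ha0, hb0⟩ := (add_eq_zero_iff_of_nonneg (hpx.dotProduct_mulVec_nonneg v)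
      (hpy.dotProduct_mulVec_nonneg v)).1 h0
    rw [hpx.dotProduct_mulVec_zero_iff, smul_mulVec] at ha0
    rw [hpy.dotProduct_mulVec_zero_iff, smul_mulVec] at hb0
    refine ⟨⟨hx, ?_⟩, ⟨hy, ?_⟩⟩
    · exact (smul_eq_zero.1 ha0).resolve_left ht0.ne'
    · exact (smul_eq_zero.1 hb0).resolve_left (by linarith)

lemma main_aux (n : ℕ) (hn : 2 ≤ n)
    (A : Matrix (Fin n × Fin n) (Fin n × Fin n) ℂ)
    (hA : A ∈ Cset n) (hrank : A.rank = n ^ 2 - 1) :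
    faceDim (faceGen (Cset n) A) = n ^ 4 - 3 * n ^ 2 + 1 := by
  obtain ⟨v, hv, hAv, hker⟩ := exists_ker A (by
    have : 0 < n ^ 2 := by positivity
    rw [hrank, Fintype.card_prod, Fintype.card_fin, ← pow_two]
    omega)
  have hAC := (mem_Cset_iff n A).1 hA
  rw [← finrank_dirSp hn v hv]
  have e : vectorSpan ℝ (faceGen (Cset n) A) = dirSp v := by
    apply le_antisymm
    · have hsub : faceGen (Cset n) A ⊆ {B | B ∈ Cset n ∧ mv v B = 0} :=
        fun B hB => hB _ ⟨isFace_ker n v, hA, hAv⟩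
      refine (vectorSpan_mono ℝ hsub).trans ?_
      rw [vectorSpan, Submodule.span_le]
      rintro _ ⟨x, hx, y, hy, rfl⟩
      have hx1 := (mem_Cset_iff n x).1 hx.1
      have hy1 := (mem_Cset_iff n y).1 hy.1
      change x - y ∈ dirSp v
      refine ⟨⟨hx1.1.1.sub hy1.1.1, ?_⟩, ?_⟩
      · rw [SetLike.mem_coe, LinearMap.mem_ker, map_sub, hx.2, hy.2, sub_zero]
      · rw [SetLike.mem_coe, LinearMap.mem_ker, map_sub, hx1.2, hy1.2, sub_self]
    · rintro H ⟨⟨hH, hHv⟩, hHp⟩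
      rw [SetLike.mem_coe, LinearMap.mem_ker] at hHv hHp
      obtain ⟨ε, hε, h1, h2⟩ := psd_pert A H v hAC.1 hker hv hAv hH hHv
      have hm1 : A + ε • H ∈ Cset n :=
        (mem_Cset_iff _ _).2 ⟨h1, by rw [map_add, map_smul, hHp, hAC.2]; simp⟩
      have hm2 : A - ε • H ∈ Cset n :=
        (mem_Cset_iff _ _).2 ⟨h2, by rw [map_sub, map_smul, hHp, hAC.2]; simp⟩
      have hf1 : A + ε • H ∈ faceGen (Cset n) A := by
        rintro F ⟨hF, hAF⟩
        refine (hF.2.2 _ hm1 _ hm2 (1/2) (by norm_num) (by norm_num) ?_).1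
        convert hAF using 1
        module
      have hf2 : A ∈ faceGen (Cset n) A := fun F hF => hF.2
      have := vsub_mem_vectorSpan ℝ hf1 hf2
      rw [vsub_eq_sub, add_sub_cancel_left] at this
      exact (Submodule.smul_mem_iff _ hε.ne').1 this
  unfold faceDim
  rw [e]

/-- If `n ≥ 2` and `A ∈ C_n` has rank `n² - 1`, then the face of `C_n` generated by
`A` has dimension exactly `n⁴ - 3n² + 1`. -/
theorem faceDim_of_rank_eq (n : ℕ) (hn : 2 ≤ n)
    (A : Matrix (Fin n × Fin n) (Fin n × Fin n) ℂ)
    (hA : A ∈ Cset n) (hrank : A.rank = n ^ 2 - 1) :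
    faceDim (faceGen (Cset n) A) = n ^ 4 - 3 * n ^ 2 + 1 := by
  exact main_aux n hn A hA hrank
end
end

section
/- Let n ≥ 2 be an integer and let A = (a_{kl}) ∈ C_n with rank A = 2. Suppose the rows and columns of A indexed by 2, 3, …, n are zero and a_{11} = 1 (equivalently, the quantum channel L with Choi matrix A satisfies L(E_{11}) = E_{11}). If there exists an index i with 1 < i < n², i ≡ 1 (mod n), and a_{ii} > 0, then A is an extreme point of C_n. -/
open Matrix
open scoped ComplexOrder

noncomputable section

theorem ker_of_openSegment_aux {ι : Type*} [Fintype ι] {A B C : Matrix ι ι ℂ} (hB : B.PosSemidef)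
    (hC : C.PosSemidef) {a b : ℝ} (ha : 0 < a) (hb : 0 < b) (h : a • B + b • C = A)
    (z : ι → ℂ) (hz : A *ᵥ z = 0) : B *ᵥ z = 0 := by
  have h0 : star z ⬝ᵥ (A *ᵥ z) = 0 := by rw [hz]; simp
  have h1 := hB.dotProduct_mulVec_nonneg z
  have h2 := hC.dotProduct_mulVec_nonneg z
  rw [← hB.dotProduct_mulVec_zero_iff]
  rw [← h, add_mulVec, smul_mulVec, smul_mulVec, dotProduct_add, dotProduct_smul,
    dotProduct_smul] at h0
  rw [Complex.le_def] at h1 h2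
  have h3 := congrArg Complex.re h0
  simp only [Complex.add_re, Complex.real_smul, Complex.re_ofReal_mul, Complex.zero_re] at h3 h1 h2
  apply Complex.ext
  · simp only [Complex.zero_re]
    nlinarith [mul_nonneg ha.le h1.1, mul_nonneg hb.le h2.1]
  · exact h1.2.symm

theorem rank_two_minor_aux {ι : Type*} [Fintype ι] [DecidableEq ι] (A : Matrix ι ι ℂ)
    (hrank : A.rank = 2) (o p : ι) (h1 : A o o = 1) (h2 : A o p = 0) (h3 : A p o = 0)
    (r q : ι) : A p p * A r q = A p p * A r o * A o q + A r p * A p q := by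
  have hd : (A.submatrix ![o, p, r] ![o, p, q]).det = 0 := by
    by_contra hne
    have hu := Matrix.rank_of_isUnit (A.submatrix ![o, p, r] ![o, p, q])
      ((Matrix.isUnit_iff_isUnit_det _).2 (isUnit_iff_ne_zero.2 hne))
    have := Matrix.rank_submatrix_le A ![o, p, r] ![o, p, q]
    rw [Fintype.card_fin] at hu
    omega
  rw [Matrix.det_fin_three] at hd
  simp [h1, h2, h3] at hd
  linear_combination hd

/-- Case (iia): if `A ∈ C_n` has rank 2, the rows and columns indexed by `2, …, n`
(i.e. by the pairs `(1,k)`, `k ≠ 1`) vanish, `a₁₁ = 1`, and some diagonal entry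
`a_{ii}` with `1 < i < n²`, `i ≡ 1 (mod n)` (i.e. a pair index `(m,1)`, `m ≠ 1`)
is positive, then `A` is an extreme point of `C_n`. -/
theorem extreme_of_diag_pos (n : ℕ) (hn : 2 ≤ n)
    (A : Matrix (Fin n × Fin n) (Fin n × Fin n) ℂ) (hA : A ∈ Cset n)
    (hrank : A.rank = 2)
    (hzero : ∀ k : Fin n, k ≠ ⟨0, by omega⟩ → ∀ q : Fin n × Fin n,
      A (⟨0, by omega⟩, k) q = 0 ∧ A q (⟨0, by omega⟩, k) = 0)
    (h11 : A (⟨0, by omega⟩, ⟨0, by omega⟩) (⟨0, by omega⟩, ⟨0, by omega⟩) = 1)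
    (m : Fin n) (hm : m ≠ ⟨0, by omega⟩)
    (hpos : 0 < (A (m, ⟨0, by omega⟩) (m, ⟨0, by omega⟩)).re) :
    A ∈ Set.extremePoints ℝ (Cset n) := by
  obtain ⟨hAp, hAt⟩ := hA
  set z : Fin n := ⟨0, by omega⟩ with hzdef
  have key : ∀ B : Matrix (Fin n × Fin n) (Fin n × Fin n) ℂ, B ∈ Cset n →
      B.IsHermitian ∧ ((∀ k, k ≠ z → ∀ q, B q (z, k) = 0) →
        B (z, z) (z, z) = 1 ∧ B (z, z) (m, z) = 0 ∧ B (m, z) (z, z) = 0) := by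
    rintro B ⟨hB, hBt⟩
    refine ⟨hB.1, fun h0 => ?_⟩
    have e1 := hBt z z
    rw [Finset.sum_eq_single z (fun k _ hk => h0 k hk _) (by simp)] at e1
    have e2 := hBt m z
    rw [Finset.sum_eq_single z (fun k _ hk => h0 k hk _) (by simp)] at e2
    rw [if_neg hm] at e2
    refine ⟨by simpa using e1, ?_, e2⟩
    rw [← hB.1.apply, e2, star_zero]
  have hA0 := (key A ⟨hAp, hAt⟩).2 (fun k hk q => (hzero k hk q).2)
  obtain ⟨-, hA2, hA3⟩ := hA0
  have hminor := rank_two_minor_aux A hrank (z, z) (m, z) h11 hA2 hA3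
  set c := A (m, z) (m, z) with hc
  have hc0 : c ≠ 0 := by
    intro h
    rw [h] at hpos
    simp at hpos
  rw [mem_extremePoints_iff_left]
  refine ⟨⟨hAp, hAt⟩, ?_⟩
  rintro B hB C hC ⟨a, b, ha, hb, -, hABC⟩
  have hker := ker_of_openSegment_aux hB.1 hC.1 ha hb hABC
  have hBz : ∀ k, k ≠ z → ∀ q, B q (z, k) = 0 := by
    intro k hk q
    have := hker (Pi.single (z, k) 1) (by
      ext r
      simpa using (hzero k hk r).2)
    simpa using congrFun this q
  obtain ⟨hBh, hB0⟩ := key B hB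
  obtain ⟨hB1, hB2, hB3⟩ := hB0 hBz
  have hcol : ∀ r q, c * B r q
      = c * B r (z, z) * A (z, z) q + B r (m, z) * A (m, z) q := by
    intro r q
    have := hker (c • Pi.single q 1 - (c * A (z, z) q) • Pi.single (z, z) 1
      - (A (m, z) q) • Pi.single (m, z) 1) (by
      ext s
      have := hminor s q
      simp [mulVec_sub, mulVec_smul]
      linear_combination this)
    have := congrFun this r
    simp [mulVec_sub, mulVec_smul] at this
    linear_combination this
  have hBo : ∀ q, B (z, z) q = A (z, z) q := by
    intro q
    have := hcol (z, z) q
    rw [hB1, hB2] at this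
    apply mul_left_cancel₀ hc0
    linear_combination this
  have hBo' : ∀ q, B q (z, z) = A q (z, z) := by
    intro q
    rw [← hBh.apply, ← hAp.1.apply, hBo]
  set d := B (m, z) (m, z) with hd
  have hBp : ∀ q, c * B (m, z) q = d * A (m, z) q := by
    intro q
    have := hcol (m, z) q
    rw [hB3] at this
    linear_combination this
  have hcs : star c = c := hAp.1.apply _ _
  have hds : star d = d := hBh.apply _ _
  have hBp' : ∀ q, c * B q (m, z) = d * A q (m, z) := by
    intro q
    have := congrArg star (hBp q)
    rw [star_mul', star_mul', hcs, hds, hBh.apply, hAp.1.apply] at this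
    exact this
  have hdiff : ∀ r q, c * c * (B r q - A r q) = (d - c) * (A r (m, z) * A (m, z) q) := by
    intro r q
    have e1 := hcol r q
    have e2 := hminor r q
    have e3 := hBp' r
    rw [hBo'] at e1
    linear_combination c * e1 - c * e2 + A (m, z) q * e3
  have hdc : d - c = 0 := by
    have hs : ∑ k, c * c * (B (m, k) (m, k) - A (m, k) (m, k)) = 0 := by
      rw [← Finset.mul_sum, Finset.sum_sub_distrib, hB.2, hAt, sub_self, mul_zero]
    simp_rw [hdiff] at hs
    rw [← Finset.mul_sum] at hs
    refine (mul_eq_zero.1 hs).resolve_right ?_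
    intro h
    have h' := congrArg Complex.re h
    have hn : ∀ k, A (m, k) (m, z) * A (m, z) (m, k)
        = ((Complex.normSq (A (m, z) (m, k)) : ℝ) : ℂ) := by
      intro k
      rw [← hAp.1.apply (m, k) (m, z), Complex.normSq_eq_conj_mul_self]
      rfl
    simp_rw [hn] at h'
    rw [Complex.re_sum] at h'
    simp only [Complex.ofReal_re, Complex.zero_re] at h'
    rw [Finset.sum_eq_zero_iff_of_nonneg (fun k _ => Complex.normSq_nonneg _)] at h'
    exact hc0 (Complex.normSq_eq_zero.1 (h' z (Finset.mem_univ _)))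
  ext r q
  have := hdiff r q
  rw [hdc, zero_mul] at this
  have h2 := (mul_eq_zero.1 this).resolve_left (mul_ne_zero hc0 hc0)
  exact sub_eq_zero.1 h2
end
end
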